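/- arXiv:1911.02544 — 3 statements merged into one kernel-verified Lean document; each statement's English description precedes it below -/
import Mathlib

section
/- Let A be a Marot ISP-ring and let I be a proper invertible radical ideal of A. Then I is zero-dimensional, i.e., every prime ideal of A containing I is a maximal ideal (equivalently, the quotient ring A/I is zero-dimensional). -/
/-- An ideal is *regular* if it contains a regular element (a non-zero-divisor). -/
def Ideal.IsRegularIdeal {A : Type*} [CommRing A] (I : Ideal A) : Prop :=
  ∃ a ∈ I, a ∈ nonZeroDivisors A

/-- An ideal is *invertible* if it is regular, finitely generated and locally principal. -/
def Ideal.IsInvertibleIdeal {A : Type*} [CommRing A] (J : Ideal A) : Prop :=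
  J.IsRegularIdeal ∧ J.FG ∧
    ∀ M : Ideal A, ∀ hM : M.IsMaximal,
      haveI := hM.isPrime
      (J.map (algebraMap A (Localization.AtPrime M))).IsPrincipal

/-- `I` can be written as an invertible ideal times a nonempty product of
proper radical ideals. -/
def Ideal.HasISPFactorization {A : Type*} [CommRing A] (I : Ideal A) : Prop :=
  ∃ (J : Ideal A) (L : List (Ideal A)), J.IsInvertibleIdeal ∧ L ≠ [] ∧
    (∀ H ∈ L, H ≠ ⊤ ∧ H.IsRadical) ∧ I = J * L.prod

/-- An ISP-ring: every proper regular ideal factors as an invertible ideal times a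
nonempty product of proper radical ideals. -/
def IsISPRing (A : Type*) [CommRing A] : Prop :=
  ∀ I : Ideal A, I ≠ ⊤ → I.IsRegularIdeal → I.HasISPFactorization

/-- A strongly ISP-ring: every proper ideal factors as an invertible ideal times a
nonempty product of proper radical ideals. -/
def IsStronglyISPRing (A : Type*) [CommRing A] : Prop :=
  ∀ I : Ideal A, I ≠ ⊤ → I.HasISPFactorization

/-- An ISP-domain: an integral domain in which every proper nonzero ideal factors as an
invertible ideal times a nonempty product of proper radical ideals. -/
def IsISPDomain (A : Type*) [CommRing A] : Prop :=
  IsDomain A ∧ ∀ I : Ideal A, I ≠ ⊤ → I ≠ ⊥ → I.HasISPFactorization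

/-- A Marot ring: every regular ideal is generated by the regular elements it contains. -/
def IsMarotRing (A : Type*) [CommRing A] : Prop :=
  ∀ I : Ideal A, I.IsRegularIdeal →
    I = Ideal.span ((I : Set A) ∩ (nonZeroDivisors A : Set A))

/-- Every proper ideal containing `I ^ 2` is a locally principal ideal times radical ideals. -/
def FacW (R : Type*) [CommRing R] (I : Ideal R) : Prop :=
  ∀ K : Ideal R, K ≠ ⊤ → I ^ 2 ≤ K → ∃ (J : Ideal R) (L : List (Ideal R)),
    (∀ N : Ideal R, ∀ _hN : N.IsPrime,
      (J.map (algebraMap R (Localization.AtPrime N))).IsPrincipal) ∧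
    (∀ H ∈ L, H ≠ ⊤ ∧ H.IsRadical) ∧ K = J * L.prod

/-- Every proper ideal containing `x ^ 2` is a principal ideal times radical ideals. -/
def FacS (R : Type*) [CommRing R] (x : R) : Prop :=
  ∀ K : Ideal R, K ≠ ⊤ → x ^ 2 ∈ K → ∃ (j : R) (L : List (Ideal R)),
    (∀ H ∈ L, H ≠ ⊤ ∧ H.IsRadical) ∧ K = Ideal.span {j} * L.prod

open IsLocalRing

lemma radical_eq_max {B : Type*} [CommRing B] [IsLocalRing B] (D H : Ideal B)
    (hmin : ∀ N : Ideal B, N.IsPrime → D ≤ N → N = maximalIdeal B)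
    (hD : D ≤ H) (hH : H ≠ ⊤) (hr : H.IsRadical) : H = maximalIdeal B := by
  apply le_antisymm (le_maximalIdeal hH)
  rw [← hr.radical, Ideal.radical_eq_sInf]
  refine le_sInf ?_
  rintro N ⟨h1, h2⟩
  exact (hmin N h2 (hD.trans h1)).ge

lemma prod_le_of_mem {B : Type*} [CommRing B] (L : List (Ideal B)) (H : Ideal B) (h : H ∈ L) :
    L.prod ≤ H := by
  obtain ⟨c, hc⟩ := List.dvd_prod h
  rw [hc]; exact Ideal.mul_le_left

lemma fac_max {B : Type*} [CommRing B] [IsLocalRing B] (D K : Ideal B) (j : B)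
    (L : List (Ideal B))
    (hmin : ∀ N : Ideal B, N.IsPrime → D ≤ N → N = maximalIdeal B)
    (hDK : D ≤ K.radical)
    (hL : ∀ H ∈ L, H ≠ ⊤ ∧ H.IsRadical) (hK : K = Ideal.span {j} * L.prod) :
    K = Ideal.span {j} ∨ ∃ k, K = (Ideal.span {j} * maximalIdeal B ^ k) * maximalIdeal B := by
  have h1 : ∀ H ∈ L, H = maximalIdeal B := by
    intro H hH
    refine radical_eq_max D H hmin ?_ (hL H hH).1 (hL H hH).2
    refine hDK.trans ?_
    rw [← (hL H hH).2.radical]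
    apply Ideal.radical_mono
    rw [hK]
    exact Ideal.mul_le_right.trans (prod_le_of_mem L H hH)
  have h2 := List.eq_replicate_of_mem h1
  rw [h2, List.prod_replicate] at hK
  rcases Nat.eq_zero_or_eq_succ_pred L.length with h | h
  · left; rw [hK, h]; simp
  · right; refine ⟨L.length.pred, ?_⟩
    rw [hK, mul_assoc, ← pow_succ]
    conv_lhs => rw [h]

lemma one_sub_unit {B : Type*} [CommRing B] [IsLocalRing B] {z : B} (hz : z ∈ maximalIdeal B) :
    ∃ v, (1 - z) * v = 1 := by
  have : IsUnit (1 - z) := by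
    rcases IsLocalRing.isUnit_or_isUnit_one_sub_self z with h | h
    · exact absurd h ((mem_maximalIdeal z).1 hz)
    · exact h
  exact this.exists_right_inv

lemma principal_mod {B : Type*} [CommRing B] [IsLocalRing B] (E N M : Ideal B) (c : B)
    (hE : E ≠ ⊤) (hc : ∀ s, s * c ∈ E → s ∈ E) (h1 : N * M ≤ E ⊔ Ideal.span {c})
    (h2 : c ∈ N * M) : ∃ b ∈ M, M ≤ E ⊔ Ideal.span {b} := by
  have h3 : ¬ N * M ≤ E ⊔ Ideal.span {c} * maximalIdeal B := by
    intro h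
    obtain ⟨e, he, f, hf, hef⟩ := Submodule.mem_sup.1 (h h2)
    obtain ⟨z, hz, rfl⟩ := Ideal.mem_span_singleton_mul.1 hf
    obtain ⟨v, hv⟩ := one_sub_unit hz
    have : 1 * c ∈ E := by
      have : 1 * c = e * v := by linear_combination (-c) * hv - v * hef
      rw [this]; exact E.mul_mem_right _ he
    exact hE ((Ideal.eq_top_iff_one _).2 (hc 1 this))
  rw [Ideal.mul_le] at h3
  push Not at h3
  obtain ⟨a, ha, b, hb, hab⟩ := h3
  obtain ⟨e, he, f, hf, hef⟩ := Submodule.mem_sup.1 (h1 (Ideal.mul_mem_mul ha hb))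
  obtain ⟨u, rfl⟩ := Ideal.mem_span_singleton'.1 hf
  have hu : IsUnit u := by
    by_contra hu
    apply hab
    rw [← hef]
    refine Submodule.add_mem_sup he ?_
    rw [mul_comm u c]
    exact Ideal.mul_mem_mul (Ideal.mem_span_singleton_self c) ((mem_maximalIdeal u).2 hu)
  obtain ⟨v, hv⟩ := hu.exists_right_inv
  refine ⟨b, hb, fun z hz => ?_⟩
  obtain ⟨e', he', f, hf, hef'⟩ := Submodule.mem_sup.1 (h1 (Ideal.mul_mem_mul ha hz))
  obtain ⟨w, rfl⟩ := Ideal.mem_span_singleton'.1 hf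
  have hs : z - b * w * v ∈ E := by
    apply hc
    have : (z - b * w * v) * c = b * v * (e' - e * w * v) - e * v * (z - b * w * v) := by
      linear_combination (-(z - b * w * v) * c - b*v*w*c) * hv + v * z * hef - b * v * hef'
    rw [this]
    exact E.sub_mem (E.mul_mem_left _ (E.sub_mem he' (E.mul_mem_right _ (E.mul_mem_right _ he))))
      (E.mul_mem_right _ (E.mul_mem_right _ he))
  have : z = (z - b * w * v) + (w * v) * b := by ring
  rw [this]
  exact Submodule.add_mem_sup hs (Ideal.mul_mem_left _ _ (Ideal.mem_span_singleton_self b))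

lemma dvd_of_pair {B : Type*} [CommRing B] [IsLocalRing B] (u v j : B)
    (hu : u ∈ nonZeroDivisors B)
    (h : Ideal.span {u, v} = Ideal.span {j}) : u ∣ v ∨ v ∣ u := by
  have h1 : u ∈ Ideal.span {j} := h ▸ Ideal.subset_span (by simp)
  have h2 : v ∈ Ideal.span {j} := h ▸ Ideal.subset_span (by simp)
  have h3 : j ∈ Ideal.span {u, v} := h ▸ Ideal.mem_span_singleton_self j
  obtain ⟨c, rfl⟩ := Ideal.mem_span_singleton'.1 h1
  obtain ⟨d, rfl⟩ := Ideal.mem_span_singleton'.1 h2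
  by_cases hc : IsUnit c
  · obtain ⟨c', hc'⟩ := hc.exists_right_inv
    left; exact ⟨c' * d, by linear_combination (-d * j) * hc'⟩
  by_cases hd : IsUnit d
  · obtain ⟨c', hc'⟩ := hd.exists_right_inv
    right; exact ⟨c' * c, by linear_combination (-c * j) * hc'⟩
  exfalso
  obtain ⟨a, b, hab⟩ := Ideal.mem_span_pair.1 h3
  have hz : a * c + b * d ∈ maximalIdeal B :=
    Ideal.add_mem _ (Ideal.mul_mem_left _ _ hc) (Ideal.mul_mem_left _ _ hd)
  obtain ⟨w, hw⟩ := one_sub_unit hz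
  have : j = 0 := by linear_combination (-w) * hab - j * hw
  subst this
  rw [mul_zero] at hu
  exact zero_notMem_nonZeroDivisors hu

lemma mem_of_mem_sq {B : Type*} [CommRing B] [IsLocalRing B] (P : Ideal B) (t : B)
    (htM : t ∈ maximalIdeal B) (ht : maximalIdeal B ≤ P ⊔ Ideal.span {t})
    (h2 : t ∈ maximalIdeal B * maximalIdeal B) : t ∈ P := by
  have h3 := Ideal.mul_mono ht ht h2
  have h4 : (P ⊔ Ideal.span {t}) * (P ⊔ Ideal.span {t}) ≤ P ⊔ Ideal.span {t ^ 2} := by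
    rw [Ideal.mul_le]
    intro r hr s hs
    obtain ⟨p, hp, f, hf, rfl⟩ := Submodule.mem_sup.1 hr
    obtain ⟨b, rfl⟩ := Ideal.mem_span_singleton'.1 hf
    obtain ⟨q, hq, g, hg, rfl⟩ := Submodule.mem_sup.1 hs
    obtain ⟨c, rfl⟩ := Ideal.mem_span_singleton'.1 hg
    have : (p + b * t) * (q + c * t) = (p * (q + c * t) + b * t * q) + (b * c) * t ^ 2 := by ring
    rw [this]
    exact Submodule.add_mem_sup (P.add_mem (P.mul_mem_right _ hp) (P.mul_mem_left _ hq))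
      (Ideal.mul_mem_left _ _ (Ideal.mem_span_singleton_self _))
  obtain ⟨p, hp, f, hf, hpf⟩ := Submodule.mem_sup.1 (h4 h3)
  obtain ⟨b, rfl⟩ := Ideal.mem_span_singleton'.1 hf
  obtain ⟨v, hv⟩ := one_sub_unit (Ideal.mul_mem_left _ b htM)
  have : t = p * v := by linear_combination (-v) * hpf - t * hv
  rw [this]; exact P.mul_mem_right _ hp

lemma stepB {B : Type*} [CommRing B] [IsLocalRing B] (x m : B) (hF : FacS B x)
    (hx : x ∈ nonZeroDivisors B) (hxM : x ∈ maximalIdeal B) (hmM : m ∈ maximalIdeal B)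
    (hm : ∀ s, x ∣ s * m → x ∣ s)
    (hmin : ∀ N : Ideal B, N.IsPrime → Ideal.span {x, m} ≤ N → N = maximalIdeal B) : False := by
  have hxu : ¬ x ∣ 1 := fun h => hxM (isUnit_of_dvd_one h)
  have cancel : ∀ {a b : B}, x * a = x * b → a = b := fun h =>
    (mul_cancel_left_mem_nonZeroDivisors hx).1 h
  have hspan : ∀ {a b : B}, a ∈ maximalIdeal B → b ∈ maximalIdeal B →
      Ideal.span {a, b} ≤ maximalIdeal B := by
    intro a b ha hb
    rw [Ideal.span_le]; rintro _ (rfl | rfl) <;> assumption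
  have hne : (maximalIdeal B) ≠ ⊤ := Ideal.IsPrime.ne_top'
  -- first factorization
  have hm2 : ∀ s, x ∣ s * m ^ 2 → x ∣ s := fun s h => hm s (hm _ (by convert h using 1; ring))
  have key : ∃ t ∈ maximalIdeal B, maximalIdeal B ≤ Ideal.span {x} ⊔ Ideal.span {t} := by
    obtain ⟨j, L, hL, hK⟩ := hF (Ideal.span {x, m ^ 2})
      (ne_top_of_le_ne_top hne (hspan hxM (Ideal.pow_mem_of_mem _ hmM 2 (by norm_num))))
      (Ideal.pow_mem_of_mem _ (Ideal.subset_span (by simp)) 2 (by norm_num))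
    have hr : Ideal.span {x, m} ≤ (Ideal.span {x, m ^ 2}).radical := by
      rw [Ideal.span_le]; rintro _ (rfl | rfl)
      · exact Ideal.le_radical (Ideal.subset_span (by simp))
      · exact ⟨2, Ideal.subset_span (by simp)⟩
    rcases fac_max _ _ j L hmin hr hL hK with h | ⟨k, h⟩
    · exfalso
      rcases dvd_of_pair _ _ _ hx h with h | ⟨e, he⟩
      · exact hxu (hm2 1 (by simpa using h))
      · obtain ⟨f, rfl⟩ := hm2 e ⟨1, by rw [mul_one, mul_comm]; exact he.symm⟩
        have : m ^ 2 * f = 1 := cancel (by linear_combination -he)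
        exact hmM (isUnit_of_dvd_one ⟨m * f, by linear_combination -this⟩)
    · refine principal_mod (Ideal.span {x}) _ _ (m ^ 2) ?_ ?_ ?_ (h ▸ Ideal.subset_span (by simp))
      · exact fun h => hxu (Ideal.mem_span_singleton.1 (h ▸ trivial))
      · simpa [Ideal.mem_span_singleton] using hm2
      · rw [← h, ← Ideal.span_union]; exact le_rfl
  obtain ⟨t, htM, ht⟩ := key
  have ht' : ∀ s, x ∣ s * t → x ∣ s := by
    intro s hs
    obtain ⟨e, he, f, hf, hef⟩ := Submodule.mem_sup.1 (ht hmM)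
    obtain ⟨a, rfl⟩ := Ideal.mem_span_singleton'.1 he
    obtain ⟨b, rfl⟩ := Ideal.mem_span_singleton'.1 hf
    obtain ⟨c, hc⟩ := hs
    exact hm s ⟨s * a + b * c, by linear_combination b * hc - s * hef⟩
  have htx : ¬ t ∣ x := by
    rintro ⟨e, he⟩
    obtain ⟨f, rfl⟩ := ht' e ⟨1, by linear_combination -he⟩
    have : t * f = 1 := cancel (by linear_combination -he)
    exact htM (isUnit_of_dvd_one ⟨f, this.symm⟩)
  have hxt : ¬ x ∣ t := fun h => hxu (ht' 1 (by simpa using h))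
  have hx2 : x ^ 2 ∈ nonZeroDivisors B := pow_mem hx 2
  obtain ⟨j, L, hL, hK⟩ := hF (Ideal.span {x ^ 2, t})
      (ne_top_of_le_ne_top hne (hspan (Ideal.pow_mem_of_mem _ hxM 2 (by norm_num)) htM))
      (Ideal.subset_span (by simp))
  have hmin' : ∀ N : Ideal B, N.IsPrime → Ideal.span {x, t} ≤ N → N = maximalIdeal B := by
    intro N hN hle
    apply le_antisymm (le_maximalIdeal hN.ne_top)
    refine ht.trans ?_
    rwa [← Ideal.span_union]
  have hr : Ideal.span {x, t} ≤ (Ideal.span {x ^ 2, t}).radical := by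
    rw [Ideal.span_le]; rintro _ (rfl | rfl)
    · exact ⟨2, Ideal.subset_span (by simp)⟩
    · exact Ideal.le_radical (Ideal.subset_span (by simp))
  rcases fac_max _ _ j L hmin' hr hL hK with h | ⟨k, h⟩
  · rcases dvd_of_pair _ _ _ hx2 h with h | ⟨e, he⟩
    · exact hxt ((dvd_pow_self x two_ne_zero).trans h)
    · obtain ⟨f, rfl⟩ := ht' e ⟨x, by linear_combination -he⟩
      exact htx ⟨f, cancel (by linear_combination he)⟩
  · by_cases hT : Ideal.span {j} * maximalIdeal B ^ k = ⊤
    · rw [hT, Ideal.top_mul] at h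
      obtain ⟨a, b, hab⟩ := Ideal.mem_span_pair.1 (h ▸ hxM)
      obtain ⟨v, hv⟩ := one_sub_unit (Ideal.mul_mem_left _ a hxM)
      exact htx ⟨b * v, by linear_combination (-v) * hab - x * hv⟩
    · have h2 : t ∈ maximalIdeal B * maximalIdeal B :=
        Ideal.mul_mono_left (le_maximalIdeal hT) (h ▸ Ideal.subset_span (by simp))
      exact hxt (Ideal.mem_span_singleton.1 (mem_of_mem_sq _ t htM ht h2))

lemma stepA {B : Type*} [CommRing B] [IsLocalRing B] (x m : B) (P : Ideal B) (hP : P.IsPrime)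
    (hF : FacS B x) (hx : x ∈ nonZeroDivisors B) (hrad : (Ideal.span {x}).IsRadical)
    (hxP : x ∈ P) (hmM : m ∈ maximalIdeal B) (hmP : m ∉ P)
    (hmin : ∀ N : Ideal B, N.IsPrime → P ⊔ Ideal.span {m} ≤ N → N = maximalIdeal B) :
    ∃ y m', y ∈ nonZeroDivisors B ∧ y ∈ maximalIdeal B ∧ FacS B y ∧ m' ∈ maximalIdeal B ∧
      ∀ s, y ∣ s * m' → y ∣ s := by
  have hne : (maximalIdeal B) ≠ ⊤ := Ideal.IsPrime.ne_top'
  have hPM : P ≤ maximalIdeal B := le_maximalIdeal hP.ne_top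
  by_cases h : ∃ j ∈ maximalIdeal B, j ∉ P ∧ j ∣ x
  · obtain ⟨j, hjM, hjP, y, rfl⟩ := h
    obtain ⟨hj, hy⟩ := mul_mem_nonZeroDivisors.1 hx
    have hyP : y ∈ P := (hP.mem_or_mem hxP).resolve_left hjP
    refine ⟨y, j, hy, hPM hyP, ?_, hjM, ?_⟩
    · intro K hK hyK
      exact hF K hK (by rw [mul_pow]; exact K.mul_mem_left _ hyK)
    · rintro s ⟨c, hc⟩
      have : s * j ∈ Ideal.span {j * y} := by
        apply hrad
        refine ⟨2, Ideal.mem_span_singleton.2 ⟨s * c, by linear_combination s * j * hc⟩⟩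
      obtain ⟨d, hd⟩ := Ideal.mem_span_singleton.1 this
      exact ⟨d, (mul_cancel_left_mem_nonZeroDivisors hj).1 (by linear_combination hd)⟩
  push Not at h
  have key : ∃ t ∈ maximalIdeal B, maximalIdeal B ≤ P ⊔ Ideal.span {t} := by
    have hKM : P ⊔ Ideal.span {m ^ 2} ≤ maximalIdeal B := by
      refine sup_le hPM ?_
      rw [Ideal.span_singleton_le_iff_mem]
      exact Ideal.pow_mem_of_mem _ hmM 2 (by norm_num)
    obtain ⟨j, L, hL, hK⟩ := hF (P ⊔ Ideal.span {m ^ 2}) (ne_top_of_le_ne_top hne hKM)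
      (Ideal.mem_sup_left (Ideal.pow_mem_of_mem _ hxP 2 (by norm_num)))
    have hm2K : m ^ 2 ∈ P ⊔ Ideal.span {m ^ 2} :=
      Ideal.mem_sup_right (Ideal.mem_span_singleton_self _)
    have hm2P : m ^ 2 ∉ P := fun h => hmP (hP.mem_of_pow_mem 2 h)
    have hr : P ⊔ Ideal.span {m} ≤ (P ⊔ Ideal.span {m ^ 2}).radical := by
      refine sup_le (le_sup_left.trans Ideal.le_radical) ?_
      rw [Ideal.span_singleton_le_iff_mem]
      exact ⟨2, hm2K⟩
    rcases fac_max _ _ j L hmin hr hL hK with h' | ⟨k, h'⟩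
    · exfalso
      refine h j (hKM (h' ▸ Ideal.mem_span_singleton_self j)) ?_
        (Ideal.mem_span_singleton.1 (h' ▸ Ideal.mem_sup_left hxP))
      intro hj
      rw [h'] at hm2K
      exact hm2P ((Ideal.span_singleton_le_iff_mem (I := P)).2 hj hm2K)
    · refine principal_mod P _ _ (m ^ 2) hP.ne_top ?_ h'.ge (h' ▸ hm2K)
      exact fun s hs => (hP.mem_or_mem hs).resolve_right hm2P
  have key2 : ∀ t ∈ maximalIdeal B, maximalIdeal B ≤ P ⊔ Ideal.span {t} → t ∉ P ∧
      (Ideal.span {x, t}).IsRadical := by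
    intro t htM ht
    have htP : t ∉ P := by
      intro htP
      have := ht hmM
      rw [sup_eq_left.2 ((Ideal.span_singleton_le_iff_mem (I := P)).2 htP)] at this
      exact hmP this
    refine ⟨htP, ?_⟩
    have hKM : Ideal.span {x, t} ≤ maximalIdeal B := by
      rw [Ideal.span_le]; rintro _ (rfl | rfl)
      · exact hPM hxP
      · exact htM
    obtain ⟨j, L, hL, hK⟩ := hF (Ideal.span {x, t}) (ne_top_of_le_ne_top hne hKM)
      (Ideal.pow_mem_of_mem _ (Ideal.subset_span (by simp)) 2 (by norm_num))
    have hxj : x ∈ Ideal.span {j} :=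
      Ideal.mul_le_left (hK ▸ Ideal.subset_span (by simp) : x ∈ Ideal.span {j} * L.prod)
    have htj : t ∈ Ideal.span {j} :=
      Ideal.mul_le_left (hK ▸ Ideal.subset_span (by simp) : t ∈ Ideal.span {j} * L.prod)
    have hjP : j ∉ P := fun hj => htP ((Ideal.span_singleton_le_iff_mem (I := P)).2 hj htj)
    have hju : IsUnit j := by
      by_contra hj
      exact h j hj hjP (Ideal.mem_span_singleton.1 hxj)
    rw [Ideal.span_singleton_eq_top.2 hju, Ideal.top_mul] at hK
    match L, hL, hK with
    | [], hL, hK =>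
      exfalso
      rw [hK] at hKM
      exact hne (top_le_iff.1 (by simpa using hKM))
    | [H], hL, hK =>
      rw [hK]; simpa using (hL H (by simp)).2
    | H₁ :: H₂ :: L, hL, hK =>
      exfalso
      have h2 : t ∈ maximalIdeal B * maximalIdeal B := by
        have : (H₁ :: H₂ :: L).prod ≤ maximalIdeal B * maximalIdeal B := by
          rw [List.prod_cons, List.prod_cons]
          exact Ideal.mul_mono (le_maximalIdeal (hL H₁ (by simp)).1)
            (Ideal.mul_le_left.trans (le_maximalIdeal (hL H₂ (by simp)).1))
        exact this (hK ▸ Ideal.subset_span (by simp))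
      exact htP (mem_of_mem_sq _ t htM ht h2)
  obtain ⟨t, htM, ht⟩ := key
  refine ⟨x, t, hx, hPM hxP, hF, htM, ?_⟩
  obtain ⟨htP, -⟩ := key2 t htM ht
  intro s hs
  have hsP : s ∈ P := (hP.mem_or_mem (P.mem_of_dvd hs hxP)).resolve_right htP
  have hts : maximalIdeal B ≤ P ⊔ Ideal.span {t + s} := by
    refine ht.trans (sup_le le_sup_left ?_)
    rw [Ideal.span_singleton_le_iff_mem]
    have := Submodule.add_mem_sup (P.neg_mem hsP) (Ideal.mem_span_singleton_self (t + s))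
    rwa [neg_add_cancel_comm_assoc] at this
  obtain ⟨htsP, hR⟩ := key2 (t + s) (Ideal.add_mem _ htM (hPM hsP)) hts
  obtain ⟨c, hc⟩ := hs
  have htR : t ∈ Ideal.span {x, t + s} := by
    apply hR
    exact ⟨2, Ideal.mem_span_pair.2 ⟨-c, t, by linear_combination hc⟩⟩
  obtain ⟨a, b, hab⟩ := Ideal.mem_span_pair.1 htR
  -- s = -a x + (1-b)(t+s)
  have hb : 1 - b ∈ P := by
    refine (hP.mem_or_mem (?_ : (1 - b) * (t + s) ∈ P)).resolve_right htsP
    have : (1 - b) * (t + s) = s + a * x := by linear_combination -hab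
    rw [this]; exact P.add_mem hsP (P.mul_mem_left _ hxP)
  obtain ⟨v, hv⟩ := one_sub_unit (hPM hb)
  -- s * b = -a x + (1-b) t
  have hd : (1 - b) * t ∈ Ideal.span {x} := by
    apply hrad
    refine ⟨2, Ideal.mem_span_singleton.2 ⟨(1 - b) * (b * c + a * t), ?_⟩⟩
    linear_combination (1 - b) * (b * hc - t * hab)
  obtain ⟨d, hd⟩ := Ideal.mem_span_singleton.1 hd
  exact ⟨(d - a) * v, by linear_combination v * (hd + hab) - s * hv⟩

lemma facS_localization {R : Type*} [CommRing R] (I : Ideal R) (hF : FacW R I) (N : Ideal R)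
    [hN : N.IsPrime] (x : Localization.AtPrime N)
    (hx : I.map (algebraMap R (Localization.AtPrime N)) = Ideal.span {x}) :
    FacS (Localization.AtPrime N) x := by
  classical
  intro K hK hxK
  have hmc : (K.comap (algebraMap R (Localization.AtPrime N))).map
      (algebraMap R (Localization.AtPrime N)) = K :=
    IsLocalization.map_under N.primeCompl (Localization.AtPrime N) K
  obtain ⟨J, L, hJ, hL, hKL⟩ := hF (K.comap (algebraMap R (Localization.AtPrime N)))
    (Ideal.comap_ne_top _ hK) (by
      rw [← Ideal.map_le_iff_le_comap, Ideal.map_pow, hx, Ideal.span_singleton_pow,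
        Ideal.span_singleton_le_iff_mem]
      exact hxK)
  obtain ⟨j, hj⟩ := (hJ N hN).principal
  rw [Ideal.submodule_span_eq] at hj
  have hprod : ∀ L : List (Ideal R), (∀ H ∈ L, H ≠ ⊤ ∧ H.IsRadical) →
      ∃ L' : List (Ideal (Localization.AtPrime N)), (∀ H ∈ L', H ≠ ⊤ ∧ H.IsRadical) ∧
        L.prod.map (algebraMap R (Localization.AtPrime N)) = L'.prod := by
    intro L
    induction L with
    | nil =>
      intro _
      exact ⟨[], by simp, by simp [Ideal.one_eq_top, Ideal.map_top]⟩
    | cons H L ih =>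
      intro hL
      obtain ⟨L', h1, h2⟩ := ih fun H' hH' => hL H' (List.mem_cons_of_mem _ hH')
      by_cases hT : H.map (algebraMap R (Localization.AtPrime N)) = ⊤
      · refine ⟨L', h1, ?_⟩
        rw [List.prod_cons, Ideal.map_mul, hT, Ideal.top_mul, h2]
      · refine ⟨H.map (algebraMap R (Localization.AtPrime N)) :: L', ?_, ?_⟩
        · intro H' hH'
          rcases List.mem_cons.1 hH' with rfl | h
          · refine ⟨hT, ?_⟩
            rw [← Ideal.radical_eq_iff, ← IsLocalization.map_radical N.primeCompl,
              (hL H (by simp)).2.radical]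
          · exact h1 H' h
        · rw [List.prod_cons, List.prod_cons, Ideal.map_mul, h2]
  obtain ⟨L', h1, h2⟩ := hprod L hL
  refine ⟨j, L', h1, ?_⟩
  rw [← hmc, hKL, Ideal.map_mul, h2, hj]

lemma isPrincipal_map {R S : Type*} [CommRing R] [CommRing S] (f : R →+* S) (J : Ideal R)
    (hJ : J.IsPrincipal) : (J.map f).IsPrincipal := by
  obtain ⟨j, hj⟩ := hJ.principal
  rw [Ideal.submodule_span_eq] at hj
  refine ⟨f j, ?_⟩
  rw [hj, Ideal.map_span, Set.image_singleton, Ideal.submodule_span_eq]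

lemma FacS.facW {R : Type*} [CommRing R] {x : R} (h : FacS R x) : FacW R (Ideal.span {x}) := by
  intro K hK hxK
  rw [Ideal.span_singleton_pow, Ideal.span_singleton_le_iff_mem] at hxK
  obtain ⟨j, L, hL, hKL⟩ := h K hK hxK
  exact ⟨Ideal.span {j}, L, fun N _ => isPrincipal_map _ _ ⟨j, rfl⟩, hL, hKL⟩

lemma Ideal.IsInvertibleIdeal.principal_atPrime {A : Type*} [CommRing A] {J : Ideal A}
    (hJ : J.IsInvertibleIdeal) (N : Ideal A) [hN : N.IsPrime] :
    (J.map (algebraMap A (Localization.AtPrime N))).IsPrincipal := by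
  obtain ⟨M, hM, hNM⟩ := Ideal.exists_le_maximal N hN.ne_top
  haveI := hM.isPrime
  have hu : ∀ y : M.primeCompl, IsUnit (algebraMap A (Localization.AtPrime N) y) := fun y =>
    IsLocalization.map_units (Localization.AtPrime N)
      (⟨y, fun h => y.2 (hNM h)⟩ : N.primeCompl)
  have h1 := isPrincipal_map (IsLocalization.lift (S := Localization.AtPrime M) hu) _
    (hJ.2.2 M hM)
  rwa [Ideal.map_map, IsLocalization.lift_comp] at h1

lemma min_localization {R : Type*} [CommRing R] (D Q : Ideal R) [hQ : Q.IsPrime]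
    (hmin : Q ∈ D.minimalPrimes) (N : Ideal (Localization.AtPrime Q)) (hN : N.IsPrime)
    (hD : D.map (algebraMap R (Localization.AtPrime Q)) ≤ N) :
    N = maximalIdeal (Localization.AtPrime Q) := by
  have h1 : N.comap (algebraMap R (Localization.AtPrime Q)) ≤ Q := by
    have := Ideal.comap_mono (f := algebraMap R (Localization.AtPrime Q))
      (le_maximalIdeal hN.ne_top)
    exact this.trans_eq (Localization.AtPrime.under_maximalIdeal)
  have h2 : Q ≤ N.comap (algebraMap R (Localization.AtPrime Q)) :=
    hmin.2 ⟨hN.comap _, Ideal.map_le_iff_le_comap.1 hD⟩ h1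
  apply le_antisymm (le_maximalIdeal hN.ne_top)
  rw [← Localization.AtPrime.map_eq_maximalIdeal]
  exact Ideal.map_le_iff_le_comap.2 h2

lemma reg_localization {R : Type*} [CommRing R] (Q : Ideal R) [hQ : Q.IsPrime] {a : R}
    (ha : a ∈ nonZeroDivisors R) :
    algebraMap R (Localization.AtPrime Q) a ∈ nonZeroDivisors (Localization.AtPrime Q) :=
  IsLocalization.map_nonZeroDivisors_le Q.primeCompl _ ⟨a, ha, rfl⟩

lemma mem_max_localization {R : Type*} [CommRing R] (Q : Ideal R) [hQ : Q.IsPrime] {a : R}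
    (ha : a ∈ Q) :
    algebraMap R (Localization.AtPrime Q) a ∈ maximalIdeal (Localization.AtPrime Q) := by
  rw [← Localization.AtPrime.map_eq_maximalIdeal]
  exact Ideal.mem_map_of_mem _ ha

/-- In a local ring, no nonunit can be regular modulo a suitable regular nonunit. -/
lemma stepB' {B : Type*} [CommRing B] [IsLocalRing B] (y m : B) (hF : FacS B y)
    (hy : y ∈ nonZeroDivisors B) (hyM : y ∈ maximalIdeal B) (hmM : m ∈ maximalIdeal B)
    (hm : ∀ s, y ∣ s * m → y ∣ s) : False := by
  have hle : Ideal.span {y, m} ≤ maximalIdeal B := by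
    rw [Ideal.span_le]; rintro _ (rfl | rfl) <;> assumption
  obtain ⟨Q, hQ, -⟩ := Ideal.exists_minimalPrimes_le hle
  haveI := hQ.1.1
  refine stepB (algebraMap B (Localization.AtPrime Q) y) (algebraMap B (Localization.AtPrime Q) m)
    (facS_localization _ hF.facW Q _ ?_) (reg_localization Q hy)
    (mem_max_localization Q (hQ.1.2 (Ideal.subset_span (by simp))))
    (mem_max_localization Q (hQ.1.2 (Ideal.subset_span (by simp)))) ?_ ?_
  · rw [Ideal.map_span, Set.image_singleton]
  · intro s hs
    obtain ⟨s, σ, rfl⟩ := IsLocalization.exists_mk'_eq Q.primeCompl s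
    have hmap : ∀ z, algebraMap B (Localization.AtPrime Q) y ∣ z ↔
        z ∈ (Ideal.span {y}).map (algebraMap B (Localization.AtPrime Q)) := by
      intro z
      rw [Ideal.map_span, Set.image_singleton, Ideal.mem_span_singleton]
    rw [hmap, mul_comm, IsLocalization.mul_mk'_eq_mk'_of_mul,
      IsLocalization.mk'_mem_map_algebraMap_iff] at hs
    rw [hmap, IsLocalization.mk'_mem_map_algebraMap_iff]
    obtain ⟨τ, hτ, h⟩ := hs
    refine ⟨τ, hτ, ?_⟩
    rw [Ideal.mem_span_singleton] at h ⊢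
    exact hm _ (by convert h using 1; ring)
  · intro N hN hD
    refine min_localization _ Q hQ N hN ?_
    rwa [Ideal.map_span, Set.image_pair]

/-- Any proper invertible radical ideal of a Marot ISP-ring is zero-dimensional: every
prime ideal containing it is maximal. -/
theorem invertible_radical_zero_dimensional_of_marot_isISPRing {A : Type*} [CommRing A]
    (hmarot : IsMarotRing A) (hisp : IsISPRing A)
    (I : Ideal A) (hI : I ≠ ⊤) (hinv : I.IsInvertibleIdeal) (hrad : I.IsRadical) :
    ∀ P : Ideal A, P.IsPrime → I ≤ P → P.IsMaximal := by
  intro P hP hIP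
  by_contra hPmax
  obtain ⟨M, hM, hPM⟩ := Ideal.exists_le_maximal P hP.ne_top
  have hnle : ¬ M ≤ P := fun h => hPmax (le_antisymm hPM h ▸ hM)
  obtain ⟨m, hmM, hmP⟩ := SetLike.not_le_iff_exists.1 hnle
  haveI := hM.isPrime
  have hle : P ⊔ Ideal.span {m} ≤ M :=
    sup_le hPM ((Ideal.span_singleton_le_iff_mem (I := M)).2 hmM)
  obtain ⟨Q, hQ, -⟩ := Ideal.exists_minimalPrimes_le hle
  haveI := hQ.1.1
  have hPQ : P ≤ Q := le_sup_left.trans hQ.1.2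
  have hmQ : m ∈ Q := hQ.1.2 (Ideal.mem_sup_right (Ideal.mem_span_singleton_self m))
  have hFW : FacW A I := by
    intro K hK hIK
    obtain ⟨a, haI, ha⟩ := hinv.1
    obtain ⟨J, L, hJ, -, hL, hKL⟩ := hisp K hK
      ⟨a ^ 2, hIK (Ideal.pow_mem_pow haI 2), pow_mem ha 2⟩
    exact ⟨J, L, fun N _ => hJ.principal_atPrime N, hL, hKL⟩
  obtain ⟨x, hx⟩ := (hinv.principal_atPrime Q).principal
  rw [Ideal.submodule_span_eq] at hx
  have hFS := facS_localization I hFW Q x hx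
  have hxreg : x ∈ nonZeroDivisors (Localization.AtPrime Q) := by
    obtain ⟨a, haI, ha⟩ := hinv.1
    have h1 := Ideal.mem_map_of_mem (algebraMap A (Localization.AtPrime Q)) haI
    rw [hx] at h1
    obtain ⟨c, hc⟩ := Ideal.mem_span_singleton.1 h1
    have h2 := reg_localization Q ha
    rw [hc] at h2
    exact (mul_mem_nonZeroDivisors.1 h2).1
  have hxrad : (Ideal.span {x}).IsRadical := by
    rw [← hx, ← Ideal.radical_eq_iff, ← IsLocalization.map_radical Q.primeCompl, hrad.radical]
  have hdisj : Disjoint (Q.primeCompl : Set A) (P : Set A) :=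
    Set.disjoint_left.2 fun z hz hzP => hz (hPQ hzP)
  have hP' : (P.map (algebraMap A (Localization.AtPrime Q))).IsPrime :=
    IsLocalization.isPrime_of_isPrime_disjoint Q.primeCompl _ P hP hdisj
  obtain ⟨y, m', hy, hyM, hyF, hmM', hm'⟩ := stepA x (algebraMap A (Localization.AtPrime Q) m)
    (P.map (algebraMap A (Localization.AtPrime Q))) hP' hFS hxreg hxrad
    (Ideal.map_mono hIP (hx ▸ Ideal.mem_span_singleton_self x))
    (mem_max_localization Q hmQ)
    (by
      rw [IsLocalization.algebraMap_mem_map_algebraMap_iff Q.primeCompl]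
      rintro ⟨τ, hτ, h⟩
      exact (hP.mem_or_mem h).elim (fun h => hτ (hPQ h)) hmP)
    (by
      intro N hN hD
      refine min_localization _ Q hQ N hN ?_
      rwa [Ideal.map_sup, Ideal.map_span, Set.image_singleton])
  exact stepB' y m' hyF hy hyM hmM' hm'
end

section
/- Let A be a strongly ISP-ring and let I be a proper invertible radical ideal of A. Then I is zero-dimensional: every prime ideal of A containing I is a maximal ideal (equivalently, the quotient ring A/I is zero-dimensional). -/
theorem ispAux_local {B : Type*} [CommRing B] (m : Ideal B)
    (hunit : ∀ a : B, a ∈ m → IsUnit (1 - a)) (hm : m ≠ ⊤)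
    (t x : B) (ht : t ∈ nonZeroDivisors B) (hrad : ∀ b : B, t ∣ b ^ 2 → t ∣ b)
    (N : Ideal B) (hN : ∀ b, b ∈ N ↔ t ∣ b * x)
    (hNm : N ≤ m) (hxm : x ∈ m)
    (hX : ∃ j k, N ⊔ Ideal.span {x} = Ideal.span {j} * m ^ k)
    (hY1 : ∃ j k, N ⊔ Ideal.span {x ^ 2} = Ideal.span {j} * m ^ k)
    (hY2 : ∃ j k, N * N ⊔ Ideal.span {x} = Ideal.span {j} * m ^ k) : False := by
  have htN : t ∈ N := (hN t).2 ⟨x, rfl⟩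
  have cancel : ∀ a b : B, t * a = t * b → a = b := by
    intro a b h
    exact (mul_cancel_left_mem_nonZeroDivisors ht).1 h
  have key : ∀ Y : Ideal B, t ^ 2 ∈ Y → (∀ b, (∀ y ∈ Y, t ∣ b * y) → t ∣ b) →
      (∃ j k, Y = Ideal.span {j} * m ^ k) → ∃ k, Y = m ^ k := by
    rintro Y hY hf ⟨j, k, e⟩
    have hYj : ∀ y ∈ Y, j ∣ y := by
      intro y hy
      rw [e] at hy
      exact Ideal.mem_span_singleton.1 ((Ideal.mul_le_left : Ideal.span {j} * m ^ k ≤ Ideal.span {j}) hy)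
    obtain ⟨j', hj'⟩ := hYj _ hY
    obtain ⟨r, hr⟩ := hf j' (fun y hy => by
      obtain ⟨z, rfl⟩ := hYj y hy
      exact ⟨t * z, by linear_combination (-z) * hj'⟩)
    have h1 : t = j * r := cancel _ _ (by linear_combination hj' + j * hr)
    obtain ⟨s, hs⟩ := hf r (fun y hy => by
      obtain ⟨z, rfl⟩ := hYj y hy
      exact ⟨z, by linear_combination (-z) * h1⟩)
    have h2 : 1 = j * s := cancel _ _ (by linear_combination h1 + j * hs)
    refine ⟨k, ?_⟩
    rw [e, Ideal.span_singleton_eq_top.2 (IsUnit.of_mul_eq_one s h2.symm), Ideal.top_mul]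
  have xfree : ¬ t ∣ x := by
    intro h
    apply hm
    rw [Ideal.eq_top_iff_one]
    exact hNm ((hN 1).2 (by simpa using h))
  have hNx2 : ∀ b, t ∣ b * x ^ 2 → b ∈ N := by
    intro b hb
    rw [hN]
    apply hrad
    obtain ⟨c, hc⟩ := hb
    exact ⟨c * b, by linear_combination b * hc⟩
  have hfX2 : ∀ b, b ∈ N → (∀ y ∈ N * N, t ∣ b * y) → t ∣ b := by
    intro b hb h
    have := h _ (Ideal.mul_mem_mul hb hb)
    apply hrad
    apply hrad
    obtain ⟨c, hc⟩ := this
    exact ⟨c * b, by linear_combination b * hc⟩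
  have hNN : N * N ≤ N := Ideal.mul_le_left
  obtain ⟨b, hb⟩ := key _ (Ideal.mem_sup_left (N.pow_mem_of_mem htN 2 (by norm_num))) (fun b h =>
    hfX2 b (hNx2 b (h _ (Ideal.mem_sup_right (Ideal.mem_span_singleton_self _))))
      (fun y hy => h y (Ideal.mem_sup_left (hNN hy)))) hY1
  obtain ⟨c, hc⟩ := key _ (Ideal.mem_sup_left (pow_two t ▸ Ideal.mul_mem_mul htN htN)) (fun b h =>
    hfX2 b ((hN b).2 (h _ (Ideal.mem_sup_right (Ideal.mem_span_singleton_self _))))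
      (fun y hy => h y (Ideal.mem_sup_left hy))) hY2
  have hsum : N ⊔ Ideal.span {x} ≤ (N ⊔ Ideal.span {x ^ 2}) ⊔ (N * N ⊔ Ideal.span {x}) :=
    sup_le (le_sup_left.trans le_sup_left) (le_sup_right.trans le_sup_right)
  have hcase : x ∈ N ⊔ Ideal.span {x ^ 2} ∨ N ≤ N * N ⊔ Ideal.span {x} := by
    rw [hb, hc] at hsum
    rcases le_total b c with h | h
    · left
      rw [sup_eq_left.2 (Ideal.pow_le_pow_right h : m ^ c ≤ m ^ b)] at hsum
      rw [hb]
      exact hsum (Ideal.mem_sup_right (Ideal.mem_span_singleton_self _))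
    · right
      rw [sup_eq_right.2 (Ideal.pow_le_pow_right h : m ^ b ≤ m ^ c)] at hsum
      rw [hc]
      exact le_sup_left.trans hsum
  rcases hcase with h | h
  · obtain ⟨n, hn, y, hy, e⟩ := Submodule.mem_sup.1 h
    obtain ⟨d, rfl⟩ := Ideal.mem_span_singleton.1 hy
    have h1 : x * (1 - x * d) ∈ N := by
      convert hn using 1
      linear_combination -e
    have h2 : x ∈ N := (N.mul_unit_mem_iff_mem (hunit _ (m.mul_mem_right d hxm))).1 h1
    exact xfree (hrad x (by rw [pow_two]; exact (hN x).1 h2))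
  · have hsplit : ∀ y ∈ N, ∃ z ∈ N * N, ∃ a ∈ N, y = z + x * a := by
      intro y hy
      obtain ⟨n, hn, w, hw, e⟩ := Submodule.mem_sup.1 (h hy)
      obtain ⟨a, rfl⟩ := Ideal.mem_span_singleton.1 hw
      refine ⟨n, hn, a, hNx2 a ?_, e.symm⟩
      have : x * a ∈ N := by
        have := N.sub_mem hy (hNN hn)
        rwa [← e, add_sub_cancel_left] at this
      have := (hN _).1 this
      convert this using 1
      ring
    have hxNN : ∀ z ∈ N * N, ∃ w ∈ N, x * z = t * w := by
      intro z hz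
      induction hz using Submodule.mul_induction_on' with
      | mem_mul_mem p hp q hq =>
        obtain ⟨c, hc⟩ := (hN p).1 hp
        exact ⟨c * q, N.mul_mem_left _ hq, by linear_combination q * hc⟩
      | add p hp q hq h1 h2 =>
        obtain ⟨w, hw, e⟩ := h1
        obtain ⟨v, hv, f⟩ := h2
        exact ⟨w + v, N.add_mem hw hv, by linear_combination e + f⟩
    obtain ⟨z, hz, a, ha, e⟩ := hsplit t htN
    obtain ⟨z', hz', a', ha', e'⟩ := hsplit a ha
    obtain ⟨w, hw, ew⟩ := hxNN z' hz'
    obtain ⟨s, hs⟩ := (hN a').1 ha'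
    have hu := hunit (w + x * s) (m.add_mem (hNm hw) (m.mul_mem_right s hxm))
    have hzt : z = t * (1 - (w + x * s)) := by
      linear_combination (-1 : B) * e - x * e' - ew - x * hs
    obtain ⟨v, hv, ev⟩ := hxNN z hz
    obtain ⟨v', hv'⟩ := (hN v).1 hv
    have h1 : x ^ 2 * (1 - (w + x * s)) = t * v' := by
      apply cancel
      linear_combination x * ev + t * hv' - x ^ 2 * hzt
    have h2 : t ∣ x ^ 2 := (hu.dvd_mul_right).1 ⟨v', h1⟩
    exact xfree (hrad x h2)

theorem ispAux_main {A : Type*} [CommRing A] (hisp : IsStronglyISPRing A)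
    (I : Ideal A) (hinv : I.IsInvertibleIdeal) (hrad : I.IsRadical)
    (x : A) (N : Ideal A) (hN : ∀ b, b ∈ N ↔ b * x ∈ I)
    (M : Ideal A) (hM : M.IsMaximal) (hNM : N ⊔ Ideal.span {x} ≤ M) : False := by
  haveI := hM.isPrime
  obtain ⟨Q, hQ, hQM⟩ := Ideal.exists_minimalPrimes_le hNM
  haveI hQp : Q.IsPrime := hQ.1.1
  let B := Localization.AtPrime Q
  let f : A →+* B := algebraMap A B
  have hnzd : ∀ a ∈ nonZeroDivisors A, f a ∈ nonZeroDivisors B := fun a ha =>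
    IsLocalization.map_nonZeroDivisors_le Q.primeCompl B (Submonoid.mem_map_of_mem _ ha)
  have hprin : ∀ J : Ideal A, J.IsInvertibleIdeal →
      ∃ j, J.map f = Ideal.span {j} := by
    intro J hJ
    obtain ⟨j, hj⟩ := (hJ.2.2 M hM).principal
    let g : Localization.AtPrime M →+* B :=
      IsLocalization.lift (M := M.primeCompl) (g := f) (fun y =>
        IsLocalization.map_units B (⟨y.1, fun h => y.2 (hQM h)⟩ : Q.primeCompl))
    have hg : g.comp (algebraMap A (Localization.AtPrime M)) = f := IsLocalization.lift_comp _
    refine ⟨g j, ?_⟩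
    rw [← hg, ← Ideal.map_map, hj]
    change Ideal.map g (Ideal.span {j}) = _
    rw [Ideal.map_span, Set.image_singleton]
  have hXQ : N ⊔ Ideal.span {x} ≤ Q := hQ.1.2
  have hNQ : N ≤ Q := le_sup_left.trans hXQ
  have hxQ : x ∈ Q := hXQ (Ideal.mem_sup_right (Ideal.mem_span_singleton_self _))
  let m := IsLocalRing.maximalIdeal B
  have hmQ : Q.map f = m := Localization.AtPrime.map_eq_maximalIdeal
  obtain ⟨t, ht⟩ := hprin I hinv
  have htd : ∀ b, t ∣ b ↔ b ∈ I.map f := by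
    intro b; rw [ht, Ideal.mem_span_singleton]
  have hIrad : (I.map f).IsRadical := by
    have := IsLocalization.map_radical Q.primeCompl B I
    rw [hrad.radical] at this
    change I.map f = (I.map f).radical at this
    rw [this]
    exact Ideal.radical_isRadical _
  have hmX : m ≤ ((N ⊔ Ideal.span {x}).map f).radical := by
    rw [Ideal.radical_eq_sInf]
    refine le_sInf ?_
    rintro p ⟨hp, hpp⟩
    rw [← hmQ]
    apply Ideal.map_le_iff_le_comap.2
    refine hQ.2 ⟨Ideal.comap_isPrime f p, Ideal.map_le_iff_le_comap.1 hp⟩ ?_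
    have : p ≤ m := IsLocalRing.le_maximalIdeal hpp.ne_top
    exact (Ideal.comap_mono this).trans (le_of_eq (IsLocalization.AtPrime.under_maximalIdeal B Q))
  have hfac : ∀ Y : Ideal A, Y ≤ Q → N * N ≤ Y → x ^ 2 ∈ Y →
      ∃ j k, Y.map f = Ideal.span {j} * m ^ k := by
    intro Y hYQ hNY hxY
    obtain ⟨J, L, hJ, -, hL, e⟩ := hisp Y (fun h => hQp.ne_top (top_le_iff.1 (h ▸ hYQ)))
    obtain ⟨j, hj⟩ := hprin J hJ
    have hXY : N ⊔ Ideal.span {x} ≤ Y.radical := by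
      refine sup_le (fun n hn => ⟨2, ?_⟩) ?_
      · rw [pow_two]; exact hNY (Ideal.mul_mem_mul hn hn)
      · rw [Ideal.span_singleton_le_iff_mem]; exact ⟨2, hxY⟩
    have hH : ∀ H ∈ L, Ideal.map f H = ⊤ ∨ Ideal.map f H = m := by
      intro H hH
      by_cases htop : Ideal.map f H = ⊤
      · exact Or.inl htop
      right
      refine le_antisymm (IsLocalRing.le_maximalIdeal htop) ?_
      have hYH : Y ≤ H := by
        rw [e]
        refine Ideal.mul_le_right.trans ?_
        exact Ideal.le_of_dvd (List.dvd_prod hH)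
      have hXH : N ⊔ Ideal.span {x} ≤ H :=
        hXY.trans ((Ideal.radical_mono hYH).trans (hL H hH).2.radical.le)
      have hr : (H.map f).radical = H.map f := by
        have := IsLocalization.map_radical Q.primeCompl B H
        rw [(hL H hH).2.radical] at this
        exact this.symm
      rw [← hr]
      exact hmX.trans (Ideal.radical_mono (Ideal.map_mono hXH))
    have hprod : ∀ L' : List (Ideal A), (∀ H ∈ L', Ideal.map f H = ⊤ ∨ Ideal.map f H = m) →
        ∃ k, Ideal.map f L'.prod = m ^ k := by
      intro L'
      induction L' with
      | nil => intro _; exact ⟨0, by simp [Ideal.one_eq_top, Ideal.map_top]⟩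
      | cons H T ih =>
        intro h
        obtain ⟨k, hk⟩ := ih (fun H' h' => h H' (List.mem_cons_of_mem _ h'))
        rw [List.prod_cons, Ideal.map_mul, hk]
        rcases h H List.mem_cons_self with h1 | h1
        · exact ⟨k, by rw [h1, Ideal.top_mul]⟩
        · exact ⟨k + 1, by rw [h1, pow_succ']⟩
    obtain ⟨k, hk⟩ := hprod L hH
    exact ⟨j, k, by rw [e, Ideal.map_mul, hj, hk]⟩
  refine ispAux_local m ?_ (Ideal.IsPrime.ne_top inferInstance) t (f x) ?_ ?_ (N.map f) ?_
    (hmQ ▸ Ideal.map_mono hNQ) (hmQ ▸ Ideal.mem_map_of_mem f hxQ) ?_ ?_ ?_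
  · intro a ha
    have := IsLocalRing.isUnit_or_isUnit_one_sub_self a
    exact this.resolve_left ((IsLocalRing.mem_maximalIdeal a).1 ha)
  · obtain ⟨a, ha, har⟩ := hinv.1
    obtain ⟨c, hc⟩ := (htd _).2 (Ideal.mem_map_of_mem f ha)
    have := hnzd a har
    rw [hc] at this
    exact (mul_mem_nonZeroDivisors.1 this).1
  · intro b hb
    rw [htd] at hb ⊢
    exact hIrad ⟨2, hb⟩
  · intro b
    rw [htd]
    constructor
    · intro hb
      have h1 : b * f x ∈ (N.map f) * (Ideal.span {x}).map f :=
        Ideal.mul_mem_mul hb (Ideal.mem_map_of_mem f (Ideal.mem_span_singleton_self x))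
      rw [← Ideal.map_mul] at h1
      refine Ideal.map_mono ?_ h1
      rw [Ideal.mul_le]
      intro r hr s hs
      obtain ⟨c, rfl⟩ := Ideal.mem_span_singleton.1 hs
      rw [← mul_assoc]
      exact I.mul_mem_right c ((hN r).1 hr)
    · intro hb
      obtain ⟨a, s, rfl⟩ := IsLocalization.exists_mk'_eq Q.primeCompl b
      have h2 : f (a * x) ∈ I.map f := by
        have := (I.map f).mul_mem_left (f s) hb
        rw [← mul_assoc, mul_comm (f s)] at this
        rwa [IsLocalization.mk'_spec, ← map_mul] at this
      obtain ⟨u, hu, hI⟩ := (IsLocalization.algebraMap_mem_map_algebraMap_iff Q.primeCompl B _ _).1 h2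
      have h3 : u * a ∈ N := (hN _).2 (by rwa [mul_assoc])
      rw [IsLocalization.mk'_mem_map_algebraMap_iff]
      exact ⟨u, hu, h3⟩
  · have := hfac _ hXQ (Ideal.mul_le_left.trans le_sup_left)
      (Ideal.pow_mem_of_mem _ (Ideal.mem_sup_right (Ideal.mem_span_singleton_self _)) 2 (by norm_num))
    rwa [Ideal.map_sup, Ideal.map_span, Set.image_singleton] at this
  · have := hfac (N ⊔ Ideal.span {x ^ 2})
      (sup_le hNQ ((Ideal.span_singleton_le_iff_mem _).2 (Q.pow_mem_of_mem hxQ 2 (by norm_num))))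
      (Ideal.mul_le_left.trans le_sup_left)
      (Ideal.mem_sup_right (Ideal.mem_span_singleton_self _))
    rwa [Ideal.map_sup, Ideal.map_span, Set.image_singleton, map_pow] at this
  · have := hfac (N * N ⊔ Ideal.span {x})
      (sup_le (Ideal.mul_le_left.trans hNQ) ((Ideal.span_singleton_le_iff_mem _).2 hxQ))
      le_sup_left
      (Ideal.pow_mem_of_mem _ (Ideal.mem_sup_right (Ideal.mem_span_singleton_self _)) 2 (by norm_num))
    rwa [Ideal.map_sup, Ideal.map_mul, Ideal.map_span, Set.image_singleton] at this

/-- Any proper invertible radical ideal of a strongly ISP-ring is zero-dimensional: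
every prime ideal containing it is maximal. -/
theorem invertible_radical_zero_dimensional_of_stronglyISPRing {A : Type*} [CommRing A]
    (hisp : IsStronglyISPRing A)
    (I : Ideal A) (hI : I ≠ ⊤) (hinv : I.IsInvertibleIdeal) (hrad : I.IsRadical) :
    ∀ P : Ideal A, P.IsPrime → I ≤ P → P.IsMaximal := by
  intro P hP hIP
  obtain ⟨M, hM, hPM⟩ := Ideal.exists_le_maximal P hP.ne_top
  by_contra hmax
  have hne : ¬ M ≤ P := fun h => hmax (le_antisymm hPM h ▸ hM)
  obtain ⟨x, hxM, hxP⟩ := Set.not_subset.1 hne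
  let N : Ideal A := Submodule.comap (LinearMap.mulRight A x) I
  have hN : ∀ b, b ∈ N ↔ b * x ∈ I := fun b => Iff.rfl
  refine ispAux_main hisp I hinv hrad x N hN M hM (sup_le ?_ ?_)
  · intro b hb
    exact hPM ((hP.mem_or_mem (hIP ((hN b).1 hb))).resolve_right hxP)
  · exact (Ideal.span_singleton_le_iff_mem _).2 hxM
end

section
/- A commutative ring A is a ZPI-ring (i.e., every proper ideal of A is a product of prime ideals) if and only if A is a Noetherian strongly ISP-ring. -/
/-- Every ideal is a product of prime ideals. -/
def IsZPIAux (A : Type*) [CommRing A] : Prop :=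
  ∀ I : Ideal A, I ≠ ⊤ → ∃ L : List (Ideal A), (∀ P ∈ L, P.IsPrime) ∧ I = L.prod

section aux
variable {A : Type*} [CommRing A]

lemma zaux_prod_le_mem {L : List (Ideal A)} {P : Ideal A} (h : P ∈ L) : L.prod ≤ P := by
  rw [← Multiset.prod_coe]
  exact Ideal.multiset_prod_le_inf.trans (Multiset.inf_le (by simpa using h))

lemma zaux_prime_prod {L : List (Ideal A)} {P : Ideal A} (hP : P.IsPrime) (h : L.prod ≤ P) :
    ∃ Q ∈ L, Q ≤ P := by
  rw [← Multiset.prod_coe] at h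
  obtain ⟨Q, hQ, h⟩ := hP.multiset_prod_le.1 h
  exact ⟨Q, by simpa using hQ, h⟩

lemma zaux_no_between (h : IsStronglyISPRing A) {M : Ideal A} (hM : M.IsMaximal) (I : Ideal A)
    (h1 : M * M ≤ I) (h2 : I ≤ M) : I ≤ M * M ∨ M ≤ I := by
  obtain ⟨J, L, -, hL, hH, rfl⟩ := h I (fun h => hM.ne_top (top_le_iff.1 (h ▸ h2)))
  have key : ∀ H ∈ L, H = M := by
    intro H hHL
    have hle : M * M ≤ H := h1.trans (Ideal.mul_le_right.trans (zaux_prod_le_mem hHL))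
    refine (hM.eq_of_le (hH H hHL).1 fun x hx => ?_).symm
    exact (hH H hHL).2 ⟨2, by rw [pow_two]; exact hle (Ideal.mul_mem_mul hx hx)⟩
  match L, hL with
  | [H], _ =>
    have hHM := key H (by simp)
    subst hHM
    simp only [List.prod_cons, List.prod_nil, mul_one] at *
    by_cases hJ : J ≤ H
    · left; exact Ideal.mul_mono_left hJ
    · right
      have hJ1 : J = ⊤ := by
        by_contra hne
        obtain ⟨N, hN, hJN⟩ := Ideal.exists_le_maximal J hne
        have : H ≤ N := by
          have := hN.isPrime.mul_le.1 (h1.trans (Ideal.mul_le_left.trans hJN))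
          tauto
        rw [← hM.eq_of_le hN.ne_top this] at hJN
        exact hJ hJN
      rw [hJ1, Ideal.top_mul]
  | H :: H' :: L', _ =>
    left
    have e1 := key H (by simp)
    have e2 := key H' (by simp)
    subst e1
    subst e2
    simp only [List.prod_cons]
    rw [← mul_assoc H' H', ← mul_assoc J, mul_comm J, mul_assoc]
    exact Ideal.mul_le_left

lemma zaux_gen {M : Ideal A} (hM : ∀ I : Ideal A, M * M ≤ I → I ≤ M → I ≤ M * M ∨ M ≤ I) :
    ∃ p ∈ M, M ≤ Ideal.span {p} ⊔ M * M := by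
  by_cases h : M ≤ M * M
  · exact ⟨0, M.zero_mem, h.trans le_sup_right⟩
  · obtain ⟨p, hp, hp2⟩ := Set.not_subset.1 h
    refine ⟨p, hp, ?_⟩
    rcases hM (Ideal.span {p} ⊔ M * M) le_sup_right
      (sup_le ((Ideal.span_singleton_le_iff_mem _).2 hp) Ideal.mul_le_left) with h' | h'
    · exact absurd (h' (Ideal.mem_sup_left (Ideal.mem_span_singleton_self p))) hp2
    · exact h'

lemma zaux_factor [IsNoetherianRing A] {M : Ideal A} {p : A} (hp : p ∈ M)
    (h : M ≤ Ideal.span {p} ⊔ M * M) {I : Ideal A} (hI : I ≤ M) :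
    ∃ K : Ideal A, I ≤ K ∧ I = M * K := by
  obtain ⟨s, hs1, hs2⟩ : ∃ s : A, s - 1 ∈ M ∧ ∀ x ∈ M, s * x ∈ Ideal.span {p} := by
    obtain ⟨s, hs, h'⟩ := Submodule.exists_sub_one_mem_and_smul_le_of_fg_of_le_sup
      (I := M) (N := Ideal.span {p}) (N' := M) (P := M) (IsNoetherian.noetherian M) le_rfl
        (by simpa using h)
    exact ⟨s, hs, fun x hx => h' (Submodule.smul_mem_pointwise_smul _ _ _ hx)⟩
  let K : Ideal A := 
    { carrier := {y | ∀ m ∈ M, y * m ∈ I}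
      add_mem' := fun {a b} ha hb m hm => by rw [add_mul]; exact I.add_mem (ha m hm) (hb m hm)
      zero_mem' := fun m hm => by simp
      smul_mem' := fun c x hx m hm => by
        rw [smul_eq_mul, mul_assoc]; exact I.mul_mem_left _ (hx m hm) }
  have hK : ∀ y, y ∈ K ↔ ∀ m ∈ M, y * m ∈ I := fun y => Iff.rfl
  have hIK : I ≤ K := fun x hx => (hK x).2 fun m _ => I.mul_mem_right _ hx
  refine ⟨K, hIK, le_antisymm (fun x hx => ?_) ?_⟩
  · obtain ⟨y, hy⟩ := Ideal.mem_span_singleton'.1 (hs2 x (hI hx))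
    have hyK : s * y ∈ K := by
      refine (hK _).2 fun m hm => ?_
      obtain ⟨z, hz⟩ := Ideal.mem_span_singleton'.1 (hs2 m hm)
      have : s * y * m = z * s * x := by linear_combination (-y) * hz + z * hy
      rw [this]
      exact I.mul_mem_left _ hx
    have h1 : s * s * x ∈ M * K := by
      have : s * s * x = p * (s * y) := by linear_combination (-s) * hy
      rw [this]
      exact Ideal.mul_mem_mul hp hyK
    have h2 : (s - 1) * x ∈ M * K := Ideal.mul_mem_mul hs1 (hIK hx)
    have : x = s * s * x - (s + 1) * ((s - 1) * x) := by ring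
    rw [this]
    exact sub_mem h1 (Ideal.mul_mem_left _ _ h2)
  · rw [Ideal.mul_le]
    intro m hm k hk
    rw [mul_comm]
    exact (hK k).1 hk m hm

lemma zaux_noeth_isp [IsNoetherianRing A] (h : IsStronglyISPRing A) : IsZPIAux A := by
  intro I
  refine IsNoetherian.induction (R := A) (M := A) (P := fun I : Ideal A => I ≠ ⊤ →
    ∃ L : List (Ideal A), (∀ P ∈ L, P.IsPrime) ∧ I = L.prod) ?_ I
  clear I
  intro (I : Ideal A) IH hI
  have IH' : ∀ J : Ideal A, I < J → ∃ L : List (Ideal A), (∀ P ∈ L, P.IsPrime) ∧ J = L.prod := by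
    intro J hJ
    by_cases hJt : J = ⊤
    · exact ⟨[], by simp, by simp [hJt]⟩
    · exact IH J hJ hJt
  by_cases hprime : I.IsPrime
  · exact ⟨[I], by simpa using hprime, by simp⟩
  by_cases hex : ∃ M : Ideal A, M.IsMaximal ∧ ∃ K : Ideal A, I < K ∧ I = M * K
  · obtain ⟨M, hM, K, hK, e⟩ := hex
    obtain ⟨L, hL, e'⟩ := IH' K hK
    refine ⟨M :: L, ?_, by rw [List.prod_cons, ← e', ← e]⟩
    intro P hP
    rcases List.mem_cons.1 hP with rfl | hP
    · exact hM.isPrime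
    · exact hL P hP
  have hMI : ∀ M : Ideal A, M.IsMaximal → I ≤ M → I = M * I := by
    intro M hM hIM
    obtain ⟨p, hp, hpM⟩ := zaux_gen (zaux_no_between h hM)
    obtain ⟨K, hK, e⟩ := zaux_factor hp hpM hIM
    rcases hK.eq_or_lt with e1 | hlt
    · rw [← e1] at e; exact e
    · exact absurd ⟨M, hM, K, hlt, e⟩ hex
  have hidem : I ≤ I * I := by
    have htop : I ⊔ Submodule.annihilator I = ⊤ := by
      by_contra hne
      obtain ⟨M, hM, hle⟩ := Ideal.exists_le_maximal _ hne
      obtain ⟨r, hr, hr0⟩ := Submodule.exists_sub_one_mem_and_smul_eq_zero_of_fg_of_le_smul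
        M I (IsNoetherian.noetherian I) (hMI M hM (le_sup_left.trans hle)).le
      have hrM : r ∈ M := hle (Ideal.mem_sup_right (Submodule.mem_annihilator.2 hr0))
      exact hM.ne_top ((Ideal.eq_top_iff_one _).2 (by simpa using M.sub_mem hrM hr))
    have h1 := (Ideal.eq_top_iff_one _).1 htop
    obtain ⟨i, hi, t, ht, e⟩ := Submodule.mem_sup.1 h1
    intro x hx
    have h0 : t * x = 0 := Submodule.mem_annihilator.1 ht x hx
    have : x = i * x := by linear_combination (-x) * e + h0
    rw [this]
    exact Ideal.mul_mem_mul hi hx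
  rw [Ideal.isPrime_iff] at hprime
  push Not at hprime
  obtain ⟨a, b, hab, ha, hb⟩ := hprime hI
  have lt : ∀ c, c ∉ I → I < I ⊔ Ideal.span {c} := fun c hc =>
    lt_of_le_of_ne le_sup_left fun e => hc (by
      rw [e]; exact Ideal.mem_sup_right (Ideal.mem_span_singleton_self c))
  obtain ⟨L1, hL1, e1⟩ := IH' _ (lt a ha)
  obtain ⟨L2, hL2, e2⟩ := IH' _ (lt b hb)
  refine ⟨L1 ++ L2, ?_, ?_⟩
  · intro P hP
    rcases List.mem_append.1 hP with hP | hP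
    · exact hL1 P hP
    · exact hL2 P hP
  · rw [List.prod_append, ← e1, ← e2]
    refine le_antisymm (hidem.trans (Ideal.mul_mono le_sup_left le_sup_left)) ?_
    rw [Ideal.sup_mul, Ideal.mul_sup (Ideal.span {a}), Ideal.span_singleton_mul_span_singleton]
    refine sup_le Ideal.mul_le_left (sup_le ?_ ?_)
    · exact Ideal.mul_le_right
    · exact (Ideal.span_singleton_le_iff_mem _).2 hab

end aux

section aux2

lemma zaux_map {A B : Type*} [CommRing A] [CommRing B] (f : A →+* B) (hA : IsZPIAux A)
    (h1 : ∀ J : Ideal B, (J.comap f).map f = J)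
    (h2 : ∀ P : Ideal A, P.IsPrime → RingHom.ker f ≤ P → P.map f = ⊤ ∨ (P.map f).IsPrime) :
    IsZPIAux B := by
  intro J hJ
  obtain ⟨L, hL, e⟩ := hA (J.comap f) (Ideal.comap_ne_top f hJ)
  have key : ∀ L : List (Ideal A), (∀ P ∈ L, P.map f = ⊤ ∨ (P.map f).IsPrime) →
      ∃ L' : List (Ideal B), (∀ P ∈ L', P.IsPrime) ∧ L.prod.map f = L'.prod := by
    intro L
    induction L with
    | nil => intro _; exact ⟨[], by simp, by simp [Ideal.one_eq_top, Ideal.map_top]⟩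
    | cons P L ih =>
      intro h
      obtain ⟨L', hL', e'⟩ := ih fun Q hQ => h Q (List.mem_cons_of_mem _ hQ)
      rcases h P List.mem_cons_self with hP | hP
      · refine ⟨L', hL', ?_⟩
        rw [List.prod_cons, Ideal.map_mul, hP, e', Ideal.top_mul]
      · refine ⟨P.map f :: L', ?_, by rw [List.prod_cons, Ideal.map_mul, e', List.prod_cons]⟩
        intro Q hQ
        rcases List.mem_cons.1 hQ with rfl | hQ
        · exact hP
        · exact hL' Q hQ
  obtain ⟨L', hL', e'⟩ := key L fun P hP => h2 P (hL P hP) (by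
    refine le_trans ?_ (e.le.trans (zaux_prod_le_mem hP))
    exact Ideal.comap_mono bot_le)
  exact ⟨L', hL', by rw [← e', ← e, h1]⟩

lemma zaux_quot {A : Type*} [CommRing A] (hA : IsZPIAux A) (I : Ideal A) : IsZPIAux (A ⧸ I) := by
  refine zaux_map (Ideal.Quotient.mk I) hA
    (fun J => Ideal.map_comap_of_surjective _ Ideal.Quotient.mk_surjective J) ?_
  intro P hP hk
  exact Or.inr (Ideal.map_isPrime_of_surjective Ideal.Quotient.mk_surjective hk)

lemma zaux_loc {A : Type*} [CommRing A] (hA : IsZPIAux A) (M : Ideal A) [M.IsPrime] :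
    IsZPIAux (Localization.AtPrime M) := by
  refine zaux_map (algebraMap A _) hA (fun J => IsLocalization.map_under M.primeCompl _ J) ?_
  intro P hP _
  by_cases hd : Disjoint (M.primeCompl : Set A) (P : Set A)
  · exact Or.inr (IsLocalization.isPrime_of_isPrime_disjoint M.primeCompl _ P hP hd)
  · left
    obtain ⟨s, hs, hsP⟩ := Set.not_disjoint_iff.1 hd
    exact Ideal.eq_top_of_isUnit_mem _ (Ideal.mem_map_of_mem _ hsP)
      (IsLocalization.map_units (Localization.AtPrime M) (⟨s, hs⟩ : M.primeCompl))

open IsLocalRing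

variable {R : Type*} [CommRing R] [IsLocalRing R]

lemma zaux_principal [IsDomain R] {I J : Ideal R} {x : R} (hx : x ≠ 0)
    (h : I * J = Ideal.span {x}) : ∃ i, I = Ideal.span {i} := by
  have : ∃ i ∈ I, ∃ j ∈ J, ∃ u : R, IsUnit u ∧ i * j = x * u := by
    by_contra hcon
    push Not at hcon
    have hle : I * J ≤ Ideal.span {x} * maximalIdeal R := by
      rw [Ideal.mul_le]
      intro i hi j hj
      have hij : i * j ∈ Ideal.span {x} := h ▸ Ideal.mul_mem_mul hi hj
      obtain ⟨u, hu⟩ := Ideal.mem_span_singleton'.1 hij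
      rw [← hu, mul_comm u x]
      refine Ideal.mul_mem_mul (Ideal.mem_span_singleton_self x) ?_
      rw [mem_maximalIdeal]
      intro hunit
      exact hcon i hi j hj u hunit (by rw [← hu, mul_comm])
    have hxm : x ∈ Ideal.span {x} * maximalIdeal R :=
      hle (h ▸ Ideal.mem_span_singleton_self x)
    obtain ⟨z, hz, e⟩ := Ideal.mem_span_singleton_mul.1 hxm
    have : z = 1 := mul_left_cancel₀ hx (by rw [e, mul_one])
    rw [this] at hz
    exact (mem_maximalIdeal _).1 hz isUnit_one
  obtain ⟨i, hi, j, hj, u, hu, e⟩ := this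
  refine ⟨i, le_antisymm (fun y hy => ?_) ((Ideal.span_singleton_le_iff_mem _).2 hi)⟩
  have hyj : y * j ∈ Ideal.span {x} := h ▸ Ideal.mul_mem_mul hy hj
  obtain ⟨c, hc⟩ := Ideal.mem_span_singleton'.1 hyj
  obtain ⟨v, hv⟩ := hu.exists_right_inv
  have hj0 : j ≠ 0 := by
    rintro rfl
    rw [mul_zero] at e
    exact mul_ne_zero hx hu.ne_zero e.symm
  refine Ideal.mem_span_singleton'.2 ⟨v * c, mul_right_cancel₀ hj0 ?_⟩
  linear_combination (v * c) * e + hc + x * c * hv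

lemma zaux_exists_prime [IsDomain R] (hR : IsZPIAux R) {x : R} (hx : x ≠ 0)
    (hm : x ∈ maximalIdeal R) : ∃ q : R, Prime q := by
  have hne : Ideal.span {x} ≠ ⊤ := fun h => (mem_maximalIdeal _).1 hm
    (Ideal.span_singleton_eq_top.1 h)
  obtain ⟨L, hL, e⟩ := hR _ hne
  match L with
  | [] => exact absurd (by simpa using e) hne
  | P :: L' =>
    rw [List.prod_cons] at e
    obtain ⟨q, hq⟩ := zaux_principal hx e.symm
    have hq0 : q ≠ 0 := by
      rintro rfl
      rw [hq] at e
      simp at e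
      exact hx e
    have hP := hL P List.mem_cons_self
    rw [hq] at hP
    exact ⟨q, (Ideal.span_singleton_prime hq0).1 hP⟩

lemma zaux_prime_gen [IsDomain R] (hR : IsZPIAux R) {q : R} (hq : Prime q) :
    maximalIdeal R = Ideal.span {q} := by
  have hqm : q ∈ maximalIdeal R := (mem_maximalIdeal _).2 hq.not_isUnit
  refine le_antisymm ?_ ((Ideal.span_singleton_le_iff_mem _).2 hqm)
  intro a ha
  by_contra haq
  set Q : Ideal R := Ideal.span {q} with hQ
  have hQp : Q.IsPrime := (Ideal.span_singleton_prime hq.ne_zero).2 hq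
  let π := Ideal.Quotient.mk Q
  have hπ : Function.Surjective π := Ideal.Quotient.mk_surjective
  have : IsLocalRing (R ⧸ Q) := IsLocalRing.of_surjective' π hπ
  have hS : IsZPIAux (R ⧸ Q) := zaux_quot hR Q
  have hker : ∀ y, π y = 0 ↔ y ∈ Q := fun y => Ideal.Quotient.eq_zero_iff_mem
  have ha0 : π a ≠ 0 := fun h => haq ((hker a).1 h)
  have ham : π a ∈ maximalIdeal (R ⧸ Q) := by
    rw [mem_maximalIdeal]
    intro hu
    obtain ⟨v, hv⟩ := hu.exists_right_inv
    obtain ⟨v, rfl⟩ := hπ v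
    have : a * v - 1 ∈ Q := (hker _).1 (by rw [map_sub, map_mul, hv, map_one, sub_self])
    have h2 : a * v - 1 ∈ maximalIdeal R := (Ideal.span_singleton_le_iff_mem _).2 hqm this
    have h3 := sub_mem (Ideal.mul_mem_right v _ ha) h2
    rw [sub_sub_cancel] at h3
    exact (mem_maximalIdeal _).1 h3 isUnit_one
  obtain ⟨b', hb'⟩ := zaux_exists_prime hS ha0 ham
  obtain ⟨b, rfl⟩ := hπ b'
  have hbQ : b ∉ Q := fun h => hb'.ne_zero ((hker b).2 h)
  have hbm : b ∈ maximalIdeal R := (mem_maximalIdeal _).2 fun h => hb'.not_isUnit (h.map π)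
  -- the ideal (q, b^2)
  set I : Ideal R := Q ⊔ Ideal.span {b * b} with hI
  have hIm : I ≤ maximalIdeal R := sup_le ((Ideal.span_singleton_le_iff_mem _).2 hqm)
    ((Ideal.span_singleton_le_iff_mem _).2 (Ideal.mul_mem_left _ _ hbm))
  obtain ⟨L, hL, e⟩ := hR I (fun h => (maximalIdeal.isMaximal R).ne_top
    (top_le_iff.1 (h ▸ hIm)))
  have hQmap : Q.map π = ⊥ := Ideal.map_quotient_self Q
  have emap : ∀ L' : List (Ideal R), L'.Perm L → (L'.prod).map π = Ideal.span {π b * π b} := by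
    intro L' hL'
    rw [hL'.prod_eq, ← e, hI, Ideal.map_sup, hQmap, bot_sup_eq, Ideal.map_span,
      Set.image_singleton, map_mul]
  have hb2 : π b * π b ≠ 0 := mul_ne_zero hb'.ne_zero hb'.ne_zero
  have key : ∀ P ∈ L, P ≤ Q ⊔ Ideal.span {b} := by
    intro P hP
    have hIP : I ≤ P := e.le.trans (zaux_prod_le_mem hP)
    have hPp := hL P hP
    have hbP : b ∈ P := by
      have : b * b ∈ P := hIP (Ideal.mem_sup_right (Ideal.mem_span_singleton_self _))
      exact (hPp.mem_or_mem this).elim id id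
    classical
    have e2 := emap (P :: L.erase P) (List.perm_cons_erase hP).symm
    rw [List.prod_cons, Ideal.map_mul] at e2
    obtain ⟨c, hc⟩ := zaux_principal hb2 e2
    have hcP : (P.map π).IsPrime := Ideal.map_isPrime_of_surjective hπ
      (by rw [Ideal.mk_ker]; exact le_sup_left.trans hIP)
    have hbc : π b ∈ Ideal.span {c} := hc ▸ Ideal.mem_map_of_mem π hbP
    rw [Ideal.mem_span_singleton] at hbc
    have hcu : ¬ IsUnit c := fun hu => hcP.ne_top (hc ▸ Ideal.span_singleton_eq_top.2 hu)
    have hass : π b ∣ c := by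
      obtain ⟨d, hd⟩ := hbc
      rcases hb'.irreducible.isUnit_or_isUnit hd with hu | hu
      · exact absurd hu hcu
      · obtain ⟨v, hv⟩ := hu.exists_right_inv
        exact ⟨v, by rw [hd, mul_assoc, hv, mul_one]⟩
    intro x hx
    have hx' : π x ∈ Ideal.span {π b} := by
      have : π x ∈ Ideal.span {c} := hc ▸ Ideal.mem_map_of_mem π hx
      rw [Ideal.mem_span_singleton] at this ⊢
      exact hass.trans this
    obtain ⟨t, ht⟩ := Ideal.mem_span_singleton'.1 hx'
    obtain ⟨t, rfl⟩ := hπ t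
    have : x - t * b ∈ Q := (hker _).1 (by rw [map_sub, map_mul, ht, sub_self])
    have h2 := Submodule.add_mem_sup this
      (Ideal.mem_span_singleton'.2 ⟨t, rfl⟩ : t * b ∈ Ideal.span {b})
    simpa using h2
  have hIP2 : I ≤ (Q ⊔ Ideal.span {b}) * (Q ⊔ Ideal.span {b}) := by
    match L, e, hL, key, emap with
    | [], e, _, _, _ =>
      simp only [List.prod_nil, Ideal.one_eq_top] at e
      exact absurd (top_le_iff.1 (e ▸ hIm)) (maximalIdeal.isMaximal R).ne_top
    | [P], e, hL, _, emap =>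
      exfalso
      have e2 := emap [P] (List.Perm.refl _)
      simp only [List.prod_cons, List.prod_nil, mul_one] at e e2
      have hbP : b ∈ P := by
        have : b * b ∈ P := e ▸ (Ideal.mem_sup_right (Ideal.mem_span_singleton_self _))
        exact ((hL P (by simp)).mem_or_mem this).elim id id
      have : π b ∈ Ideal.span {π b * π b} := e2 ▸ Ideal.mem_map_of_mem π hbP
      obtain ⟨t, ht⟩ := Ideal.mem_span_singleton'.1 this
      have h1 : π b * (t * π b) = π b * 1 := by rw [mul_one]; linear_combination ht
      have h2 := mul_left_cancel₀ hb'.ne_zero h1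
      exact hb'.not_isUnit (IsUnit.of_mul_eq_one_right _ h2)
    | P :: P' :: L', e, hL, key, _ =>
      rw [e, List.prod_cons, List.prod_cons, ← mul_assoc]
      exact Ideal.mul_le_left.trans (Ideal.mul_mono (key P (by simp)) (key P' (by simp)))
  have hqq : q ∈ (Q ⊔ Ideal.span {b}) * (Q ⊔ Ideal.span {b}) :=
    hIP2 (Ideal.mem_sup_left (Ideal.mem_span_singleton_self q))
  have hle : (Q ⊔ Ideal.span {b}) * (Q ⊔ Ideal.span {b}) ≤
      Ideal.span {q} * maximalIdeal R ⊔ Ideal.span {b * b} := by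
    have hQm : Q ≤ maximalIdeal R := (Ideal.span_singleton_le_iff_mem _).2 hqm
    have hBm : Ideal.span {b} ≤ maximalIdeal R := (Ideal.span_singleton_le_iff_mem _).2 hbm
    rw [Ideal.sup_mul, Ideal.mul_sup (Ideal.span {b}), Ideal.span_singleton_mul_span_singleton b b,
      mul_comm (Ideal.span {b}) Q]
    refine sup_le ?_ (sup_le ?_ le_sup_right)
    · exact (Ideal.mul_mono_right (sup_le hQm hBm)).trans le_sup_left
    · exact (Ideal.mul_mono_right hBm).trans le_sup_left
  obtain ⟨y, hy, z, hz, eq⟩ := Submodule.mem_sup.1 (hle hqq)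
  obtain ⟨y', hy', rfl⟩ := Ideal.mem_span_singleton_mul.1 hy
  obtain ⟨z', rfl⟩ := Ideal.mem_span_singleton'.1 hz
  have hd : q ∣ z' * (b * b) := ⟨1 - y', by linear_combination eq⟩
  have hnb : ¬ q ∣ b := fun h => hbQ (Ideal.mem_span_singleton.2 h)
  have hdz : q ∣ z' := by
    rcases hq.dvd_or_dvd hd with h | h
    · exact h
    · exact absurd ((hq.dvd_or_dvd h).elim id id) hnb
  obtain ⟨w, rfl⟩ := hdz
  have h1 : q * (y' + w * (b * b)) = q * 1 := by linear_combination eq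
  have h2 := mul_left_cancel₀ hq.ne_zero h1
  have h3 : (1 : R) ∈ maximalIdeal R := by
    rw [← h2]
    exact add_mem hy' (Ideal.mul_mem_left _ _ (Ideal.mul_mem_left _ _ hbm))
  exact (mem_maximalIdeal _).1 h3 isUnit_one

lemma zaux_domain [IsDomain R] (hR : IsZPIAux R)
    (h : maximalIdeal R ≤ maximalIdeal R * maximalIdeal R) : maximalIdeal R = ⊥ := by
  by_contra hne
  obtain ⟨x, hx, hx0⟩ := Submodule.exists_mem_ne_zero_of_ne_bot hne
  obtain ⟨q, hq⟩ := zaux_exists_prime hR hx0 hx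
  rw [zaux_prime_gen hR hq, Ideal.span_singleton_mul_span_singleton,
    Ideal.span_singleton_le_span_singleton] at h
  obtain ⟨c, hc⟩ := h
  have : q * (q * c) = q * 1 := by linear_combination -hc
  exact hq.not_isUnit (IsUnit.of_mul_eq_one _ (mul_left_cancel₀ hq.ne_zero this))

lemma zaux_prime_eq_max (hR : IsZPIAux R) {Q : Ideal R} (hQ : Q.IsPrime)
    (h : maximalIdeal R ≤ Q ⊔ maximalIdeal R * maximalIdeal R) : maximalIdeal R ≤ Q := by
  let π := Ideal.Quotient.mk Q
  have hπ : Function.Surjective π := Ideal.Quotient.mk_surjective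
  have : IsLocalRing (R ⧸ Q) := IsLocalRing.of_surjective' π hπ
  have e : maximalIdeal (R ⧸ Q) = (maximalIdeal R).map π := by
    have hmax := Ideal.map_eq_top_or_isMaximal_of_surjective π hπ (maximalIdeal.isMaximal R)
    rcases hmax with h | h
    · exfalso
      have := Ideal.comap_map_of_surjective π hπ (maximalIdeal R)
      rw [h, Ideal.comap_top, ← RingHom.ker_eq_comap_bot, Ideal.mk_ker,
        sup_eq_left.2 (le_maximalIdeal hQ.ne_top)] at this
      exact (maximalIdeal.isMaximal R).ne_top this.symm
    · exact (eq_maximalIdeal h).symm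
  have hm := zaux_domain (zaux_quot hR Q) (by
    rw [e, ← Ideal.map_mul]
    refine (Ideal.map_mono h).trans ?_
    rw [Ideal.map_sup, Ideal.map_quotient_self, bot_sup_eq])
  rw [e, Ideal.map_eq_bot_iff_le_ker, Ideal.mk_ker] at hm
  exact hm

lemma zaux_max_principal (hR : IsZPIAux R) : ∃ q, maximalIdeal R = Ideal.span {q} := by
  have key : ∀ L : List (Ideal R), (∀ P ∈ L, P = maximalIdeal R) → L.prod ≠ ⊤ →
      L.prod = maximalIdeal R ∨ L.prod ≤ maximalIdeal R * maximalIdeal R := by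
    intro L hL hne
    match L with
    | [] => exact absurd (by simp [Ideal.one_eq_top]) hne
    | [P] => left; simpa using hL P (by simp)
    | P :: P' :: L' =>
      right
      rw [List.prod_cons, List.prod_cons, ← mul_assoc, hL P (by simp), hL P' (by simp)]
      exact Ideal.mul_le_left
  by_cases hm : maximalIdeal R ≤ maximalIdeal R * maximalIdeal R
  · refine ⟨0, ?_⟩
    obtain ⟨L, hL, e⟩ := hR ⊥ bot_ne_top
    have hL' : ∀ P ∈ L, P = maximalIdeal R := fun P hP =>
      le_antisymm (le_maximalIdeal (hL P hP).ne_top)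
        (zaux_prime_eq_max hR (hL P hP) (hm.trans le_sup_right))
    have hpow : ∀ L : List (Ideal R), (∀ P ∈ L, P = maximalIdeal R) →
        maximalIdeal R ≤ L.prod := by
      intro L
      induction L with
      | nil => intro _; simp
      | cons P L ih =>
        intro h
        rw [List.prod_cons, h P (by simp)]
        exact hm.trans (Ideal.mul_mono_right (ih fun Q hQ => h Q (List.mem_cons_of_mem _ hQ)))
    have := hpow L hL'
    rw [← e] at this
    rw [le_bot_iff.1 this]
    simp
  · obtain ⟨q, hq, hq2⟩ := Set.not_subset.1 hm
    refine ⟨q, le_antisymm ?_ ((Ideal.span_singleton_le_iff_mem _).2 hq)⟩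
    have hqle : Ideal.span {q} ≤ maximalIdeal R := (Ideal.span_singleton_le_iff_mem _).2 hq
    have htop : ∀ I : Ideal R, I ≤ maximalIdeal R → I ≠ ⊤ := fun I hI h =>
      (maximalIdeal.isMaximal R).ne_top (top_le_iff.1 (h ▸ hI))
    have hprime : (Ideal.span {q}).IsPrime := by
      obtain ⟨L, hL, e⟩ := hR _ (htop _ hqle)
      match L, hL, e with
      | [], _, e => exact absurd (by simpa using e) (htop _ hqle)
      | [P], hL, e =>
        rw [e]
        simpa using hL
      | P :: P' :: L', hL, e =>
        exfalso
        apply hq2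
        have : Ideal.span {q} ≤ maximalIdeal R * maximalIdeal R := by
          rw [e, List.prod_cons, List.prod_cons, ← mul_assoc]
          exact Ideal.mul_le_left.trans (Ideal.mul_mono (le_maximalIdeal (hL P (by simp)).ne_top)
            (le_maximalIdeal (hL P' (by simp)).ne_top))
        exact this (Ideal.mem_span_singleton_self q)
    refine zaux_prime_eq_max hR hprime ?_
    have hle : Ideal.span {q} ⊔ maximalIdeal R * maximalIdeal R ≤ maximalIdeal R :=
      sup_le hqle Ideal.mul_le_left
    obtain ⟨L, hL, e⟩ := hR _ (htop _ hle)
    have hL' : ∀ P ∈ L, P = maximalIdeal R := by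
      intro P hP
      refine le_antisymm (le_maximalIdeal (hL P hP).ne_top) ?_
      have h1 : maximalIdeal R * maximalIdeal R ≤ P :=
        le_sup_right.trans (e.le.trans (zaux_prod_le_mem hP))
      exact ((hL P hP).mul_le.1 h1).elim id id
    rcases key L hL' (e ▸ htop _ hle) with h | h
    · rw [e, h]
    · rw [← e] at h
      exact absurd (h (Ideal.mem_sup_left (Ideal.mem_span_singleton_self q))) hq2

lemma zaux_nonmax_bot (hR : IsZPIAux R) {P : Ideal R} (hP : P.IsPrime)
    (hne : ¬ maximalIdeal R ≤ P) : P = ⊥ := by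
  obtain ⟨q, hq⟩ := zaux_max_principal hR
  have hqP : q ∉ P := fun h => hne (by rw [hq]; exact (Ideal.span_singleton_le_iff_mem _).2 h)
  rw [eq_bot_iff]
  intro x hx
  have hxP : Ideal.span {x} ≤ P := (Ideal.span_singleton_le_iff_mem _).2 hx
  obtain ⟨L, hL, e⟩ := hR (Ideal.span {x}) (fun h => hP.ne_top (top_le_iff.1 (h ▸ hxP)))
  obtain ⟨P', hP'L, hP'P⟩ := zaux_prime_prod hP (e ▸ hxP)
  have h1 : P' ≤ Ideal.span {q} * P' := by
    intro y hy
    have : y ∈ Ideal.span {q} := hq ▸ le_maximalIdeal (hL P' hP'L).ne_top hy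
    obtain ⟨z, rfl⟩ := Ideal.mem_span_singleton'.1 this
    rw [mul_comm z q]
    refine Ideal.mul_mem_mul (Ideal.mem_span_singleton_self q) ?_
    exact ((hL P' hP'L).mem_or_mem hy).resolve_right fun h => hqP (hP'P h)
  classical
  have h2 : Ideal.span {x} ≤ Ideal.span {q} * Ideal.span {x} := by
    have e' : Ideal.span {x} = P' * (L.erase P').prod := by
      rw [e, (List.perm_cons_erase hP'L).prod_eq, List.prod_cons]
    rw [e', ← mul_assoc]
    exact Ideal.mul_mono_left h1
  rw [Ideal.span_singleton_mul_span_singleton, Ideal.span_singleton_le_span_singleton] at h2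
  obtain ⟨c, hc⟩ := h2
  have hqm : q ∈ maximalIdeal R := hq ▸ Ideal.mem_span_singleton_self q
  have hu : IsUnit (1 - q * c) := by
    by_contra hcon
    have := add_mem ((mem_maximalIdeal _).2 hcon) (Ideal.mul_mem_right c _ hqm)
    rw [sub_add_cancel] at this
    exact (mem_maximalIdeal _).1 this isUnit_one
  have h0 : (1 - q * c) * x = 0 := by linear_combination hc
  rw [Submodule.mem_bot]
  exact (hu.mul_right_eq_zero).1 h0

end aux2

section aux3
variable {A : Type*} [CommRing A]

open IsLocalRing

lemma zaux_glob1 (hA : IsZPIAux A) {M : Ideal A} (hM : M.IsMaximal) :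
    ∃ q ∈ M, ∀ x ∈ M, ∃ s, s ∉ M ∧ s * x ∈ Ideal.span {q} := by
  have := hM.isPrime
  obtain ⟨q', hq'⟩ := zaux_max_principal (zaux_loc hA M)
  have hmap := Localization.AtPrime.map_eq_maximalIdeal (I := M)
  have hq'm : q' ∈ M.map (algebraMap A (Localization.AtPrime M)) := by
    rw [hmap, hq']; exact Ideal.mem_span_singleton_self q'
  obtain ⟨⟨⟨q, hq⟩, t⟩, e⟩ := (IsLocalization.mem_map_algebraMap_iff M.primeCompl _).1 hq'm
  refine ⟨q, hq, fun x hx => ?_⟩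
  have hx' : algebraMap A (Localization.AtPrime M) x ∈
      (Ideal.span {q}).map (algebraMap A (Localization.AtPrime M)) := by
    have h1 : algebraMap A (Localization.AtPrime M) x ∈ Ideal.span {q'} := by
      rw [← hq', ← hmap]; exact Ideal.mem_map_of_mem _ hx
    rw [Ideal.map_span, Set.image_singleton]
    rw [Ideal.mem_span_singleton] at h1 ⊢
    refine dvd_trans ?_ h1
    have hu := IsLocalization.map_units (Localization.AtPrime M) t
    simp only at e
    rw [← e]
    exact (hu.mul_right_dvd).2 dvd_rfl
  obtain ⟨s, hs, h⟩ :=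
    (IsLocalization.algebraMap_mem_map_algebraMap_iff M.primeCompl _ _ _).1 hx'
  exact ⟨s, hs, h⟩

lemma zaux_glob2 (hA : IsZPIAux A) {M : Ideal A} (hM : M.IsMaximal) {P : Ideal A}
    (hP : P.IsPrime) (hPM : P < M) {x : A} (hx : x ∈ P) : ∃ s, s ∉ M ∧ s * x = 0 := by
  have := hM.isPrime
  have hd : Disjoint (M.primeCompl : Set A) (P : Set A) :=
    Set.disjoint_left.2 fun s hs hsP => hs (hPM.le hsP)
  have hprime := IsLocalization.isPrime_of_isPrime_disjoint M.primeCompl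
    (Localization.AtPrime M) P hP hd
  have hbot := zaux_nonmax_bot (zaux_loc hA M) hprime (by
    rw [← Localization.AtPrime.map_eq_maximalIdeal]
    intro hle
    obtain ⟨y, hyM, hyP⟩ := Set.exists_of_ssubset hPM
    obtain ⟨s, hs, h⟩ := (IsLocalization.algebraMap_mem_map_algebraMap_iff M.primeCompl _ _ _).1
      (hle (Ideal.mem_map_of_mem _ hyM))
    exact (hP.mem_or_mem h).elim (fun h' => hs (hPM.le h')) hyP)
  have hx' : algebraMap A (Localization.AtPrime M) x ∈
      (⊥ : Ideal A).map (algebraMap A (Localization.AtPrime M)) := by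
    rw [Ideal.map_bot, ← hbot]
    exact Ideal.mem_map_of_mem _ hx
  obtain ⟨s, hs, h⟩ :=
    (IsLocalization.algebraMap_mem_map_algebraMap_iff M.primeCompl _ _ _).1 hx'
  exact ⟨s, hs, h⟩

lemma zaux_dim (hA : IsZPIAux A) {P Q N : Ideal A} (hP : P.IsPrime) (hQ : Q.IsPrime)
    (hN : N.IsPrime) (h1 : P < Q) (h2 : Q < N) : False := by
  obtain ⟨M, hM, hNM⟩ := Ideal.exists_le_maximal N hN.ne_top
  refine h1.not_ge fun x hx => ?_
  obtain ⟨s, hs, h⟩ := zaux_glob2 hA hM hQ (h2.trans_le hNM) hx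
  have : s * x ∈ P := h ▸ P.zero_mem
  exact (hP.mem_or_mem this).resolve_left fun h' => hs (hNM (h2.le (h1.le h')))

lemma zaux_step (hA : IsZPIAux A) {P F : Ideal A} (hP : P.IsPrime) (hF : F.FG) (hFP : F ≤ P) :
    ∃ F' : Ideal A, F'.FG ∧ F ≤ F' ∧ F' ≤ P ∧ ∀ N : Ideal A, N.IsPrime → F' ≤ N → ¬ P ≤ N →
      ∃ Q : Ideal A, Q.IsPrime ∧ F ≤ Q ∧ Q < N := by
  obtain ⟨L, hL, e⟩ := hA F (fun h => hP.ne_top (top_le_iff.1 (h ▸ hFP)))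
  have key : ∀ L : List (Ideal A), ∃ G : Ideal A, G.FG ∧ G ≤ P ∧
      ∀ Q ∈ L, G ≤ Q → P ≤ Q := by
    intro L
    induction L with
    | nil => exact ⟨⊥, Submodule.fg_bot, bot_le, by simp⟩
    | cons Q L ih =>
      obtain ⟨G, hG, hGP, h⟩ := ih
      by_cases hPQ : P ≤ Q
      · refine ⟨G, hG, hGP, fun Q' hQ' hle => ?_⟩
        rcases List.mem_cons.1 hQ' with rfl | hQ'
        · exact hPQ
        · exact h Q' hQ' hle
      · obtain ⟨y, hy, hyQ⟩ := Set.not_subset.1 hPQ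
        refine ⟨G ⊔ Ideal.span {y}, Submodule.FG.sup hG (Submodule.fg_span_singleton y),
          sup_le hGP ((Ideal.span_singleton_le_iff_mem _).2 hy), fun Q' hQ' hle => ?_⟩
        rcases List.mem_cons.1 hQ' with rfl | hQ'
        · exact absurd (hle (Ideal.mem_sup_right (Ideal.mem_span_singleton_self y))) hyQ
        · exact h Q' hQ' (le_sup_left.trans hle)
  obtain ⟨G, hG, hGP, h⟩ := key L
  refine ⟨F ⊔ G, Submodule.FG.sup hF hG, le_sup_left, sup_le hFP hGP, fun N hN hle hPN => ?_⟩
  obtain ⟨Q, hQ, hQN⟩ := zaux_prime_prod hN (e ▸ le_sup_left.trans hle)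
  refine ⟨Q, hL Q hQ, e.le.trans (zaux_prod_le_mem hQ), lt_of_le_of_ne hQN ?_⟩
  rintro rfl
  exact hPN (h Q hQ (le_sup_right.trans hle))

lemma zaux_support (hA : IsZPIAux A) {P F : Ideal A} (hP : P.IsPrime) (hF : F.FG) (hFP : F ≤ P) :
    ∃ F' : Ideal A, F'.FG ∧ F ≤ F' ∧ F' ≤ P ∧ ∀ N : Ideal A, N.IsPrime → F' ≤ N → P ≤ N := by
  obtain ⟨F1, h1, hF1, hP1, H1⟩ := zaux_step hA hP hF hFP
  obtain ⟨F2, h2, hF2, hP2, H2⟩ := zaux_step hA hP h1 hP1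
  refine ⟨F2, h2, hF1.trans hF2, hP2, fun N hN hle => ?_⟩
  by_contra hPN
  obtain ⟨Q, hQ, hFQ, hQN⟩ := H2 N hN hle hPN
  obtain ⟨Q', hQ', -, hQQ⟩ := H1 Q hQ hFQ fun h => hPN (h.trans hQN.le)
  exact zaux_dim hA hQ' hQ hN hQQ hQN

lemma zaux_prime_fg (hA : IsZPIAux A) {P : Ideal A} (hP : P.IsPrime) : P.FG := by
  have main : ∃ F0 : Ideal A, F0.FG ∧ F0 ≤ P ∧ ∀ M : Ideal A, M.IsMaximal → P ≤ M →
      ∀ x ∈ P, ∃ s, s ∉ M ∧ s * x ∈ F0 := by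
    by_cases hmax : P.IsMaximal
    · obtain ⟨q, hq, h⟩ := zaux_glob1 hA hmax
      refine ⟨Ideal.span {q}, Submodule.fg_span_singleton q,
        (Ideal.span_singleton_le_iff_mem _).2 hq, fun M hM hPM => ?_⟩
      rw [← hmax.eq_of_le hM.ne_top hPM]
      exact h
    · refine ⟨⊥, Submodule.fg_bot, bot_le, fun M hM hPM x hx => ?_⟩
      obtain ⟨s, hs, h⟩ := zaux_glob2 hA hM hP
        (lt_of_le_of_ne hPM fun e => hmax (e ▸ hM)) hx
      exact ⟨s, hs, by simpa using h⟩
  obtain ⟨F0, hfg0, hF0, h0⟩ := main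
  obtain ⟨F, hfg, hF0F, hFP, hsupp⟩ := zaux_support hA hP hfg0 hF0
  suffices h : P = F by rw [h]; exact hfg
  refine le_antisymm (fun x hx => ?_) hFP
  let C : Ideal A := Submodule.comap (LinearMap.toSpanSingleton A A x) F
  have hC : ∀ s, s ∈ C ↔ s * x ∈ F := fun s => Iff.rfl
  have htop : C = ⊤ := by
    by_contra hne
    obtain ⟨M, hM, hle⟩ := Ideal.exists_le_maximal C hne
    have hFM : F ≤ M := fun y hy => hle ((hC y).2 (F.mul_mem_right _ hy))
    obtain ⟨s, hs, h⟩ := h0 M hM (hsupp M hM.isPrime hFM) x hx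
    exact hs (hle ((hC s).2 (hF0F h)))
  have := (hC 1).1 (htop ▸ Submodule.mem_top)
  rwa [one_mul] at this

lemma zaux_isp (hA : IsZPIAux A) : IsStronglyISPRing A := by
  intro I hI
  obtain ⟨L, hL, e⟩ := hA I hI
  refine ⟨⊤, L, ⟨⟨1, Submodule.mem_top, one_mem _⟩, ?_, ?_⟩, ?_, ?_, ?_⟩
  · exact (Ideal.fg_top A)
  · intro M hM
    rw [Ideal.map_top]
    exact ⟨1, by simp⟩
  · rintro rfl
    exact hI (by rw [e, List.prod_nil, Ideal.one_eq_top])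
  · exact fun H hH => ⟨(hL H hH).ne_top, (hL H hH).isRadical⟩
  · rw [Ideal.top_mul, e]

end aux3

/-- A ring is a ZPI-ring (every proper ideal is a product of prime ideals) if and only
if it is a Noetherian strongly ISP-ring. -/
theorem zpi_iff_noetherian_stronglyISPRing {A : Type*} [CommRing A] :
    (∀ I : Ideal A, I ≠ ⊤ →
        ∃ L : List (Ideal A), (∀ P ∈ L, P.IsPrime) ∧ I = L.prod) ↔
      (IsNoetherianRing A ∧ IsStronglyISPRing A) := by
  constructor
  · intro hA
    exact ⟨IsNoetherianRing.of_prime fun P hP => zaux_prime_fg hA hP, zaux_isp hA⟩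
  · rintro ⟨hN, hI⟩
    exact zaux_noeth_isp hI
end
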